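/- arXiv:1405.0431 — 3 statements merged into one kernel-verified Lean document; each statement's English description precedes it below -/
import Mathlib

section
/- Let n ≥ 1, let 1 < p ≤ 2, and let x, y be Hermitian n×n complex matrices. Then ‖x+y‖_p² + ‖x−y‖_p² ≥ 2‖x‖_p² + 2(p−1)‖y‖_p², where for a Hermitian matrix a, ‖a‖_p := (∑_{i=1}^n |λ_i(a)|^p)^{1/p} and λ_1(a), …, λ_n(a) are the eigenvalues of a counted with multiplicity. -/
open scoped BigOperators

/-- The Schatten `p`-norm of a Hermitian matrix `a`, defined through its eigenvalues:
`‖a‖_p = (∑ i, |λ_i(a)|^p)^{1/p}` (junk value `0` on non-Hermitian matrices). -/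
noncomputable def hermitianSchattenNorm {n : ℕ} (p : ℝ) (a : Matrix (Fin n) (Fin n) ℂ) : ℝ :=
  if ha : a.IsHermitian then (∑ i, |ha.eigenvalues i| ^ p) ^ (1 / p) else 0


/-- The odd power function `s ↦ sgn(s)|s|^(p-1)`. -/
noncomputable def oddPow (p s : ℝ) : ℝ := s * |s| ^ (p - 2)

lemma oddPow_neg (p s : ℝ) : oddPow p (-s) = - oddPow p s := by
  simp [oddPow]

lemma oddPow_of_nonneg {p s : ℝ} (hp : 1 < p) (hs : 0 ≤ s) : oddPow p s = s ^ (p - 1) := by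
  unfold oddPow
  rcases hs.eq_or_lt with h | h
  · subst h; simp [Real.zero_rpow (by linarith : p - 1 ≠ 0)]
  · rw [abs_of_pos h, show p - 1 = 1 + (p - 2) by ring, Real.rpow_add h, Real.rpow_one]

lemma oddPow_mul_self {p : ℝ} (hp : 1 < p) (s : ℝ) : oddPow p s * s = |s| ^ p := by
  unfold oddPow
  rcases eq_or_ne s 0 with h | h
  · subst h; simp [Real.zero_rpow (by linarith : p ≠ 0)]
  · have h' : 0 < |s| := abs_pos.mpr h
    rw [show p = 2 + (p - 2) by ring, Real.rpow_add h']
    norm_num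
    ring

lemma two_point_unit {u h : ℝ} (hu : 0 < u) (hu1 : u ≤ 1) (h0 : 0 ≤ h) (h1 : h ≤ 1) :
    2 * u * h ≤ (1 + h) ^ u - (1 - h) ^ u := by
  have hd : ∀ x ∈ Set.Ioo (0:ℝ) 1, HasDerivAt
      (fun h : ℝ => (1 + h) ^ u - (1 - h) ^ u - 2 * u * h)
      (u * (1 + x) ^ (u - 1) + u * (1 - x) ^ (u - 1) - 2 * u) x := by
    intro x hx
    have e1 : HasDerivAt (fun h : ℝ => (1 + h) ^ u) (1 * u * (1 + x) ^ (u - 1)) x :=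
      ((hasDerivAt_id x).const_add 1).rpow_const (Or.inl (by simp; linarith [hx.1]))
    have e2 : HasDerivAt (fun h : ℝ => (1 - h) ^ u) ((-1) * u * (1 - x) ^ (u - 1)) x :=
      ((hasDerivAt_id x).const_sub 1).rpow_const (Or.inl (by simp; linarith [hx.2]))
    have e3 : HasDerivAt (fun h : ℝ => 2 * u * h) (2 * u * 1) x :=
      (hasDerivAt_id x).const_mul (2 * u)
    refine HasDerivAt.congr_deriv ((e1.sub e2).sub e3) ?_
    ring
  have hm : MonotoneOn (fun h : ℝ => (1 + h) ^ u - (1 - h) ^ u - 2 * u * h) (Set.Icc 0 1) := by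
    apply monotoneOn_of_deriv_nonneg (convex_Icc 0 1)
    · apply ContinuousOn.sub
      · apply ContinuousOn.sub
        · exact ContinuousOn.rpow_const (by fun_prop) (fun x _ => Or.inr hu.le)
        · exact ContinuousOn.rpow_const (by fun_prop) (fun x _ => Or.inr hu.le)
      · fun_prop
    · rw [interior_Icc]
      intro x hx
      exact (hd x hx).differentiableAt.differentiableWithinAt
    · rw [interior_Icc]
      intro x hx
      rw [(hd x hx).deriv]
      have hA : 0 < (1 + x) ^ (u - 1) := Real.rpow_pos_of_pos (by linarith [hx.1]) _
      have hB : 0 < (1 - x) ^ (u - 1) := Real.rpow_pos_of_pos (by linarith [hx.2]) _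
      have hAB : 1 ≤ (1 + x) ^ (u - 1) * (1 - x) ^ (u - 1) := by
        rw [← Real.mul_rpow (by linarith [hx.1]) (by linarith [hx.2])]
        apply Real.one_le_rpow_of_pos_of_le_one_of_nonpos
        · nlinarith [hx.1, hx.2]
        · nlinarith [hx.1, hx.2]
        · linarith
      have : 2 ≤ (1 + x) ^ (u - 1) + (1 - x) ^ (u - 1) := by
        nlinarith [sq_nonneg ((1 + x) ^ (u - 1) - (1 - x) ^ (u - 1))]
      nlinarith
  have := hm (Set.mem_Icc.mpr ⟨le_refl 0, zero_le_one⟩) (Set.mem_Icc.mpr ⟨h0, h1⟩) h0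
  simp at this
  linarith

lemma two_point_same {p a c : ℝ} (hp : 1 < p) (hp2 : p ≤ 2) (hc : 0 ≤ c) (hca : c ≤ a) :
    (p - 1) * ((a + c) / 2) ^ (p - 2) * (a - c) ^ 2 ≤
      (a ^ (p - 1) - c ^ (p - 1)) * (a - c) := by
  rcases (add_nonneg (hc.trans hca) hc).eq_or_lt with h | h
  · have : a = 0 := by linarith
    have : c = 0 := by linarith
    subst_vars; simp
  set m := (a + c) / 2 with hm
  have hm0 : 0 < m := by positivity
  set t := (a - c) / 2 / m with ht
  have ha : a = m * (1 + t) := by rw [ht]; field_simp; rw [hm]; ring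
  have hc' : c = m * (1 - t) := by rw [ht]; field_simp; rw [hm]; ring
  have ht0 : 0 ≤ t := by apply div_nonneg <;> linarith
  have ht1 : t ≤ 1 := by rw [ht, div_le_one hm0]; linarith
  have key := two_point_unit (u := p - 1) (by linarith) (by linarith) ht0 ht1
  have e : a ^ (p - 1) - c ^ (p - 1) = m ^ (p - 1) * ((1 + t) ^ (p - 1) - (1 - t) ^ (p - 1)) := by
    rw [ha, hc', Real.mul_rpow hm0.le (by linarith), Real.mul_rpow hm0.le (by linarith)]; ring
  have e2 : m ^ (p - 1) = m * m ^ (p - 2) := by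
    rw [show p - 1 = 1 + (p - 2) by ring, Real.rpow_add hm0, Real.rpow_one]
  have e3 : a - c = 2 * t * m := by rw [ht]; field_simp
  rw [e, e2, e3]
  have hP : 0 < m ^ (p - 2) := Real.rpow_pos_of_pos hm0 _
  have : 0 ≤ (m * m ^ (p - 2) * (2 * t * m)) *
      ((1 + t) ^ (p - 1) - (1 - t) ^ (p - 1) - 2 * (p - 1) * t) := by
    apply mul_nonneg (by positivity) (by linarith)
  nlinarith

lemma two_point_opp {p a c : ℝ} (hp : 1 < p) (hp2 : p ≤ 2) (ha : 0 ≤ a) (hc : 0 ≤ c) :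
    (p - 1) * ((a + c) / 2) ^ (p - 2) * (a + c) ^ 2 ≤
      (a ^ (p - 1) + c ^ (p - 1)) * (a + c) := by
  rcases (add_nonneg ha hc).eq_or_lt with h | h
  · rw [← h]
    simp
  set m := (a + c) with hm
  have h1 : m ^ (p - 1) ≤ a ^ (p - 1) + c ^ (p - 1) :=
    Real.rpow_add_le_add_rpow ha hc (by linarith) (by linarith)
  have e2 : m ^ (p - 1) = m * m ^ (p - 2) := by
    rw [show p - 1 = 1 + (p - 2) by ring, Real.rpow_add h, Real.rpow_one]
  have hP : 0 < m ^ (p - 2) := Real.rpow_pos_of_pos h _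
  have e3 : (m / 2) ^ (p - 2) = m ^ (p - 2) * 2 ^ (2 - p) := by
    rw [Real.div_rpow h.le (by norm_num), show (2 - p) = -(p - 2) by ring, Real.rpow_neg (by norm_num)]
    rfl
  have h2 : (2:ℝ) ^ (2 - p) ≤ 1 + (2 - p) * 1 := by
    have := rpow_one_add_le_one_add_mul_self (s := 1) (by norm_num) (p := 2 - p) (by linarith)
      (by linarith)
    norm_num at this ⊢
    linarith
  have h3 : (p - 1) * (2:ℝ) ^ (2 - p) ≤ 1 := by nlinarith [sq_nonneg (p - 2)]
  calc _ = ((p - 1) * (2:ℝ) ^ (2 - p)) * (m ^ (p - 1) * m) := by rw [e3, e2]; ring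
    _ ≤ 1 * (m ^ (p - 1) * m) := by gcongr
    _ ≤ _ := by rw [one_mul]; gcongr

lemma two_point {p : ℝ} (hp : 1 < p) (hp2 : p ≤ 2) (a c : ℝ) :
    (p - 1) * ((|a| + |c|) / 2) ^ (p - 2) * (a - c) ^ 2 ≤
      (oddPow p a - oddPow p c) * (a - c) := by
  wlog hca : |c| ≤ |a| generalizing a c
  · have := this c a (le_of_not_ge hca)
    rw [add_comm |a|]
    nlinarith
  wlog ha : 0 ≤ a generalizing a c
  · have := this (-a) (-c) (by simpa using hca) (by linarith)
    simp only [abs_neg, oddPow_neg] at this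
    nlinarith
  rw [oddPow_of_nonneg hp ha, abs_of_nonneg ha]
  rw [abs_of_nonneg ha] at hca
  rcases le_total 0 c with hc | hc
  · rw [oddPow_of_nonneg hp hc, abs_of_nonneg hc]
    rw [abs_of_nonneg hc] at hca
    exact two_point_same hp hp2 hc hca
  · have := two_point_opp hp hp2 ha (neg_nonneg.mpr hc)
    have e : oddPow p c = - (-c) ^ (p - 1) := by
      rw [← oddPow_of_nonneg hp (neg_nonneg.mpr hc), oddPow_neg]; ring
    rw [e, abs_of_nonpos hc]
    simpa [sub_eq_add_neg] using this

lemma subgrad {p : ℝ} (hp : 1 < p) (a c : ℝ) :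
    |a| ^ p + p * (oddPow p a * (c - a)) ≤ |c| ^ p := by
  rcases eq_or_ne a 0 with h | h
  · subst h
    simp [oddPow, Real.zero_rpow (by linarith : p ≠ 0)]
    positivity
  have h' : 0 < |a| := abs_pos.mpr h
  have e1 : oddPow p a * (c - a) = |a| ^ p * (c / a - 1) := by
    rw [← oddPow_mul_self hp]; field_simp
  have e2 : |c| ^ p = |a| ^ p * |c / a| ^ p := by
    rw [← Real.mul_rpow h'.le (abs_nonneg _), ← abs_mul]; congr 2; field_simp
  have hP : 0 < |a| ^ p := Real.rpow_pos_of_pos h' _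
  have key : 1 + p * (c / a - 1) ≤ |c / a| ^ p := by
    rcases le_total 0 (c / a) with hh | hh
    · have := one_add_mul_self_le_rpow_one_add (s := c / a - 1) (by linarith) hp.le
      rw [abs_of_nonneg hh]; simpa using this
    · have : 0 ≤ |c / a| ^ p := by positivity
      nlinarith
  rw [e1, e2]
  nlinarith

/-- Transfer of a resolvent inequality to negative powers. -/
lemma transfer {ι κ : Type*} [Fintype ι] [Fintype κ] (α : ℝ) (hα0 : 0 < α) (hα1 : α < 1)
    (Y T : ι → ℝ) (m b : κ → ℝ) (hT : ∀ i, 0 ≤ T i) (hb : ∀ k, 0 ≤ b k)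
    (hYT : ∀ i, T i = 0 → Y i = 0) (hmb : ∀ k, b k = 0 → m k = 0)
    (H : ∀ s : ℝ, 0 < s → ∑ k, m k / (s + b k) ≤ ∑ i, Y i / (s + T i)) :
    ∑ k, m k * b k ^ (-α) ≤ ∑ i, Y i * T i ^ (-α) := by
  have hu : (1 - α) ∈ Set.Ioo (0:ℝ) 1 := ⟨by linarith, by linarith⟩
  obtain ⟨μ, hμ⟩ := Real.exists_measure_rpow_eq_integral_rpowIntegrand₀₁ hu
  have rep : ∀ M B : ℝ, 0 ≤ B → (B = 0 → M = 0) →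
      MeasureTheory.IntegrableOn (fun t => M / B * Real.rpowIntegrand₀₁ (1 - α) t B) (Set.Ioi 0) μ ∧
      M * B ^ (-α) = ∫ t in Set.Ioi 0, M / B * Real.rpowIntegrand₀₁ (1 - α) t B ∂μ := by
    intro M B hB hMB
    refine ⟨(hμ B hB).1.const_mul _, ?_⟩
    rw [MeasureTheory.integral_const_mul, ← (hμ B hB).2]
    rcases hB.eq_or_lt with h | h
    · rw [hMB h.symm]; simp
    · rw [show 1 - α = 1 + (-α) by ring, Real.rpow_add h, Real.rpow_one]; field_simp
  have rep2 : ∀ t M B : ℝ, 0 < t → 0 ≤ B → (B = 0 → M = 0) →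
      M / B * Real.rpowIntegrand₀₁ (1 - α) t B = t ^ (1 - α - 1) * (M / (t + B)) := by
    intro t M B ht hB hMB
    rw [Real.rpowIntegrand₀₁_eq_pow_div hu ht.le hB]
    rcases hB.eq_or_lt with h | h
    · rw [hMB h.symm]; simp
    · field_simp
  rw [Finset.sum_congr rfl (fun k _ => (rep (m k) (b k) (hb k) (hmb k)).2),
    Finset.sum_congr rfl (fun i _ => (rep (Y i) (T i) (hT i) (hYT i)).2),
    ← MeasureTheory.integral_finsetSum _ (fun k _ => (rep (m k) (b k) (hb k) (hmb k)).1),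
    ← MeasureTheory.integral_finsetSum _ (fun i _ => (rep (Y i) (T i) (hT i) (hYT i)).1)]
  apply MeasureTheory.setIntegral_mono_on
  · exact MeasureTheory.integrable_finsetSum _ (fun k _ => (rep (m k) (b k) (hb k) (hmb k)).1)
  · exact MeasureTheory.integrable_finsetSum _ (fun i _ => (rep (Y i) (T i) (hT i) (hYT i)).1)
  · exact measurableSet_Ioi
  · intro t ht
    have ht' : 0 < t := ht
    rw [Finset.sum_congr rfl (fun k _ => rep2 t (m k) (b k) ht' (hb k) (hmb k)),
      Finset.sum_congr rfl (fun i _ => rep2 t (Y i) (T i) ht' (hT i) (hYT i)),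
      ← Finset.mul_sum, ← Finset.mul_sum]
    exact mul_le_mul_of_nonneg_left (H t ht') (by positivity)

/-- Reverse Hölder type inequality. -/
lemma holder_neg {κ : Type*} [Fintype κ] {p : ℝ} (hp : 1 < p) (hp2 : p ≤ 2)
    (m b : κ → ℝ) (hb : ∀ k, 0 ≤ b k) (hmb : ∀ k, b k = 0 → m k = 0) (hB : 0 < ∑ k, b k ^ p) :
    (∑ k, |m k| ^ p) ^ (2 / p) * (∑ k, b k ^ p) ^ ((p - 2) / p) ≤
      ∑ k, m k ^ 2 * b k ^ (p - 2) := by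
  set B := ∑ k, b k ^ p with hBdef
  have hp0 : 0 < p := by linarith
  have J := Real.rpow_arith_mean_le_arith_mean_rpow Finset.univ (fun k => b k ^ p / B)
    (fun k => |m k| ^ p / b k ^ p) (fun k _ => by have := hb k; positivity)
    (by rw [← Finset.sum_div]; exact div_self hB.ne')
    (fun k _ => by have := hb k; positivity) (p := 2 / p) (by rw [le_div_iff₀ hp0]; linarith)
  have e1 : ∑ k, b k ^ p / B * (|m k| ^ p / b k ^ p) = (∑ k, |m k| ^ p) / B := by
    rw [Finset.sum_div]
    apply Finset.sum_congr rfl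
    intro k _
    rcases (hb k).eq_or_lt with h | h
    · rw [hmb k h.symm, ← h]; simp [Real.zero_rpow hp0.ne']
    · have : 0 < b k ^ p := Real.rpow_pos_of_pos h _
      field_simp
  have e2 : ∑ k, b k ^ p / B * (|m k| ^ p / b k ^ p) ^ (2 / p)
      = (∑ k, m k ^ 2 * b k ^ (p - 2)) / B := by
    rw [Finset.sum_div]
    apply Finset.sum_congr rfl
    intro k _
    rcases (hb k).eq_or_lt with h | h
    · rw [hmb k h.symm, ← h]; simp [Real.zero_rpow hp0.ne']
    · have h2 : 0 < b k ^ p := Real.rpow_pos_of_pos h _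
      rw [Real.div_rpow (by positivity) h2.le, ← Real.rpow_mul (abs_nonneg _), ← Real.rpow_mul h.le,
        Real.rpow_sub h, mul_div_cancel₀ _ hp0.ne']
      norm_num
      field_simp
  rw [e1, e2, Real.div_rpow (Finset.sum_nonneg fun k _ => by positivity) hB.le,
    le_div_iff₀ hB] at J
  have e3 : B ^ ((p - 2) / p) = B / B ^ (2 / p) := by
    rw [show (p - 2) / p = 1 - 2 / p by field_simp, Real.rpow_sub hB, Real.rpow_one]
  rw [e3]
  calc _ = _ := by ring
    _ ≤ _ := J

open Matrix in
/-- trace of a product of two diagonalised matrices -/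
lemma trace_diag {n : ℕ} (U V : Matrix (Fin n) (Fin n) ℂ) (f g : Fin n → ℝ) :
    ((U * diagonal (fun i => (f i : ℂ)) * Uᴴ) * (V * diagonal (fun i => (g i : ℂ)) * Vᴴ)).trace.re
      = ∑ i, ∑ j, f i * g j * Complex.normSq ((Uᴴ * V) i j) := by
  have e : ((U * diagonal (fun i => (f i : ℂ)) * Uᴴ) *
      (V * diagonal (fun i => (g i : ℂ)) * Vᴴ)).trace
      = ((diagonal (fun i => (f i : ℂ)) * (Uᴴ * V)) *
          (diagonal (fun i => (g i : ℂ)) * (Uᴴ * V)ᴴ)).trace := by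
    rw [conjTranspose_mul, conjTranspose_conjTranspose]
    simp only [Matrix.mul_assoc]
    rw [Matrix.trace_mul_comm]
    simp only [Matrix.mul_assoc]
  rw [e, Matrix.trace, Complex.re_sum]
  apply Finset.sum_congr rfl
  intro i _
  rw [Matrix.diag_apply, Matrix.mul_apply, Complex.re_sum]
  apply Finset.sum_congr rfl
  intro j _
  rw [diagonal_mul, diagonal_mul, conjTranspose_apply]
  have : (f i : ℂ) * (Uᴴ * V) i j * ((g j : ℂ) * star ((Uᴴ * V) i j))
      = ((f i * g j * Complex.normSq ((Uᴴ * V) i j) : ℝ) : ℂ) := by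
    push_cast
    rw [Complex.normSq_eq_conj_mul_self]
    simp only [Complex.star_def]
    ring
  rw [this, Complex.ofReal_re]

open Matrix in
lemma row_sum {n : ℕ} (W : Matrix (Fin n) (Fin n) ℂ) (h : W * Wᴴ = 1) (i : Fin n) :
    ∑ j, Complex.normSq (W i j) = 1 := by
  have := congrArg (fun M => (M i i)) h
  simp only [Matrix.mul_apply, conjTranspose_apply, one_apply_eq, Complex.star_def,
    Complex.mul_conj] at this
  exact_mod_cast this

open Matrix in
lemma col_sum {n : ℕ} (W : Matrix (Fin n) (Fin n) ℂ) (h : Wᴴ * W = 1) (j : Fin n) :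
    ∑ i, Complex.normSq (W i j) = 1 := by
  have := row_sum Wᴴ (by simpa using h) j
  simpa [conjTranspose_apply] using this

open Matrix in
lemma row_sq {n : ℕ} (P Q : Matrix (Fin n) (Fin n) ℂ) (hQ : Q * Qᴴ = 1) (v : Fin n → ℝ)
    (i : Fin n) :
    ∑ j, Complex.normSq ((Pᴴ * diagonal (fun k => (v k : ℂ)) * Q) i j)
      = ∑ k, Complex.normSq (P k i) * v k ^ 2 := by
  set Z := Pᴴ * diagonal (fun k => (v k : ℂ)) * Q with hZ
  have h : Z * Zᴴ = Pᴴ * (diagonal (fun k => (v k : ℂ)) * (diagonal (fun k => (v k : ℂ)) * P)) := by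
    rw [hZ]
    simp only [conjTranspose_mul, conjTranspose_conjTranspose, diagonal_conjTranspose,
      Matrix.mul_assoc]
    rw [← Matrix.mul_assoc Q, hQ, Matrix.one_mul]
    congr 4
    ext k; simp
  have := congrArg (fun M => (M i i)) h
  simp only [Matrix.mul_apply (M := Z), Matrix.mul_apply (M := Pᴴ), diagonal_mul,
    conjTranspose_apply, Complex.star_def, Complex.mul_conj] at this
  have e : ∀ k, (starRingEnd ℂ) (P k i) * ((v k : ℂ) * ((v k : ℂ) * P k i)) =
      ((Complex.normSq (P k i) * v k ^ 2 : ℝ) : ℂ) := by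
    intro k
    push_cast
    rw [Complex.normSq_eq_conj_mul_self]; ring
  simp only [e] at this
  exact_mod_cast this

open Matrix in
lemma col_sq {n : ℕ} (P Q : Matrix (Fin n) (Fin n) ℂ) (hP : P * Pᴴ = 1) (v : Fin n → ℝ)
    (j : Fin n) :
    ∑ i, Complex.normSq ((Pᴴ * diagonal (fun k => (v k : ℂ)) * Q) i j)
      = ∑ k, Complex.normSq (Q k j) * v k ^ 2 := by
  rw [← row_sq Q P hP v j]
  apply Finset.sum_congr rfl
  intro i _
  have : Qᴴ * diagonal (fun k => (v k : ℂ)) * P = (Pᴴ * diagonal (fun k => (v k : ℂ)) * Q)ᴴ := by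
    simp only [conjTranspose_mul, conjTranspose_conjTranspose, diagonal_conjTranspose,
      Matrix.mul_assoc]
    congr 3
    ext k; simp
  rw [this, conjTranspose_apply, Complex.star_def, Complex.normSq_conj]

open Matrix in
lemma cross_sum {n : ℕ} (P Q : Matrix (Fin n) (Fin n) ℂ) (hP : P * Pᴴ = 1) (hQ : Q * Qᴴ = 1)
    (μ v : Fin n → ℝ) :
    ∑ i, ∑ j, ((Pᴴ * diagonal (fun k => (μ k : ℂ)) * Q) i j *
      star ((Pᴴ * diagonal (fun k => (v k : ℂ)) * Q) i j)).re = ∑ k, μ k * v k := by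
  set Y := Pᴴ * diagonal (fun k => (μ k : ℂ)) * Q with hY
  set Z := Pᴴ * diagonal (fun k => (v k : ℂ)) * Q with hZ
  have h : (Y * Zᴴ).trace = ((∑ k, μ k * v k : ℝ) : ℂ) := by
    have : Y * Zᴴ = Pᴴ * (diagonal (fun k => (μ k : ℂ)) * (diagonal (fun k => (v k : ℂ)) * P)) := by
      rw [hY, hZ]
      simp only [conjTranspose_mul, conjTranspose_conjTranspose, diagonal_conjTranspose,
        Matrix.mul_assoc]
      rw [← Matrix.mul_assoc Q, hQ, Matrix.one_mul]
      congr 4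
      ext k; simp
    rw [this, Matrix.trace_mul_comm]
    simp only [Matrix.mul_assoc]
    rw [hP, Matrix.mul_one, diagonal_mul_diagonal, trace_diagonal]
    push_cast
    rfl
  have h2 := congrArg Complex.re h
  rw [Complex.ofReal_re, Matrix.trace, Complex.re_sum] at h2
  rw [← h2]
  apply Finset.sum_congr rfl
  intro i _
  rw [Matrix.diag_apply, Matrix.mul_apply, Complex.re_sum]
  rfl

lemma quad_tangent (y z : ℂ) (t : ℝ) (ht : 0 < t) :
    2 * (y * star z).re - t * Complex.normSq z ≤ Complex.normSq y / t := by
  rw [le_div_iff₀ ht]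
  have : 0 ≤ Complex.normSq (y - (t : ℂ) * z) := Complex.normSq_nonneg _
  simp only [Complex.normSq_apply, Complex.sub_re, Complex.sub_im, Complex.mul_re, Complex.mul_im,
    Complex.ofReal_re, Complex.ofReal_im, Complex.star_def, Complex.conj_re, Complex.conj_im]
    at this ⊢
  nlinarith

lemma jensen_b {n : ℕ} {p : ℝ} (hp : 1 < p) (w₁ w₂ a c : Fin n → ℝ)
    (h1 : ∀ i, 0 ≤ w₁ i) (h2 : ∀ i, 0 ≤ w₂ i) (s1 : ∑ i, w₁ i = 1) (s2 : ∑ i, w₂ i = 1) :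
    ((∑ i, w₁ i * |a i| + ∑ i, w₂ i * |c i|) / 2) ^ p ≤
      (∑ i, w₁ i * |a i| ^ p + ∑ i, w₂ i * |c i| ^ p) / 2 := by
  have A := Real.rpow_arith_mean_le_arith_mean_rpow Finset.univ w₁ (fun i => |a i|)
    (fun i _ => h1 i) s1 (fun i _ => abs_nonneg _) hp.le
  have C := Real.rpow_arith_mean_le_arith_mean_rpow Finset.univ w₂ (fun i => |c i|)
    (fun i _ => h2 i) s2 (fun i _ => abs_nonneg _) hp.le
  have hA : 0 ≤ ∑ i, w₁ i * |a i| :=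
    Finset.sum_nonneg fun i _ => mul_nonneg (h1 i) (abs_nonneg _)
  have hC : 0 ≤ ∑ i, w₂ i * |c i| :=
    Finset.sum_nonneg fun i _ => mul_nonneg (h2 i) (abs_nonneg _)
  have h := (convexOn_rpow hp.le).2 (Set.mem_Ici.mpr hA) (Set.mem_Ici.mpr hC)
    (by norm_num : (0:ℝ) ≤ 1/2) (by norm_num : (0:ℝ) ≤ 1/2) (by norm_num)
  simp only [smul_eq_mul] at h
  rw [show (∑ i, w₁ i * |a i| + ∑ i, w₂ i * |c i|) / 2
    = 1/2 * (∑ i, w₁ i * |a i|) + 1/2 * ∑ i, w₂ i * |c i| by ring]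
  linarith

open Matrix in
lemma core {n : ℕ} {p : ℝ} (hp : 1 < p) (hp2 : p ≤ 2) (P Q : Matrix (Fin n) (Fin n) ℂ)
    (hP : P * Pᴴ = 1) (hQ : Q * Qᴴ = 1) (a c μ : Fin n → ℝ)
    (h : diagonal (fun k => (μ k : ℂ)) = P * diagonal (fun k => (a k : ℂ)) * Pᴴ
      - Q * diagonal (fun k => (c k : ℂ)) * Qᴴ) :
    (p - 1) * ((∑ k, |μ k| ^ p) ^ (2 / p) *
      ((∑ i, |a i| ^ p + ∑ i, |c i| ^ p) / 2) ^ ((p - 2) / p)) ≤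
    ∑ i, ∑ j, (oddPow p (a i) - oddPow p (c j)) * (a i - c j) *
      Complex.normSq ((Pᴴ * Q) i j) := by
  have hP' : Pᴴ * P = 1 := mul_eq_one_comm.mp hP
  have hQ' : Qᴴ * Q = 1 := mul_eq_one_comm.mp hQ
  have hp0 : 0 < p := by linarith
  set Y := Pᴴ * diagonal (fun k => (μ k : ℂ)) * Q with hY
  have hYW : ∀ i j, Y i j = ((a i - c j : ℝ) : ℂ) * (Pᴴ * Q) i j := by
    intro i j
    have : Y = diagonal (fun k => (a k : ℂ)) * (Pᴴ * Q) - (Pᴴ * Q) * diagonal (fun k => (c k : ℂ)) := by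
      rw [hY, h, Matrix.mul_sub, Matrix.sub_mul]
      congr 1
      · simp only [Matrix.mul_assoc]
        rw [← Matrix.mul_assoc Pᴴ P, hP', Matrix.one_mul]
      · simp only [Matrix.mul_assoc]
        rw [hQ', Matrix.mul_one]
    rw [this, Matrix.sub_apply, diagonal_mul, mul_diagonal]
    push_cast
    ring
  have hYn : ∀ i j, Complex.normSq (Y i j) = (a i - c j) ^ 2 * Complex.normSq ((Pᴴ * Q) i j) := by
    intro i j
    rw [hYW, Complex.normSq_mul, Complex.normSq_ofReal]; ring
  set b : Fin n → ℝ := fun k => (∑ i, Complex.normSq (P k i) * |a i| +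
    ∑ j, Complex.normSq (Q k j) * |c j|) / 2 with hb
  have hb0 : ∀ k, 0 ≤ b k := fun k => by
    have h1 : 0 ≤ ∑ i, Complex.normSq (P k i) * |a i| :=
      Finset.sum_nonneg fun i _ => mul_nonneg (Complex.normSq_nonneg _) (abs_nonneg _)
    have h2 : 0 ≤ ∑ i, Complex.normSq (Q k i) * |c i| :=
      Finset.sum_nonneg fun i _ => mul_nonneg (Complex.normSq_nonneg _) (abs_nonneg _)
    simp only [hb]; linarith
  have hμb : ∀ k, |μ k| ≤ 2 * b k := by
    intro k
    have h1 : ∀ (R : Matrix (Fin n) (Fin n) ℂ) (d : Fin n → ℝ),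
        (R * diagonal (fun k => (d k : ℂ)) * Rᴴ) k k =
          ((∑ i, Complex.normSq (R k i) * d i : ℝ) : ℂ) := by
      intro R d
      rw [Matrix.mul_apply]
      push_cast
      apply Finset.sum_congr rfl
      intro i _
      rw [mul_diagonal, conjTranspose_apply, Complex.normSq_eq_conj_mul_self, Complex.star_def]
      ring
    have h2 := congrArg (fun M => M k k) h
    simp only [diagonal_apply_eq, Matrix.sub_apply, h1] at h2
    have h3 : μ k = ∑ i, Complex.normSq (P k i) * a i - ∑ i, Complex.normSq (Q k i) * c i := by
      exact_mod_cast h2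
    have h4 : ∀ (R : Matrix (Fin n) (Fin n) ℂ) (d : Fin n → ℝ),
        |∑ i, Complex.normSq (R k i) * d i| ≤ ∑ i, Complex.normSq (R k i) * |d i| := by
      intro R d
      refine (Finset.abs_sum_le_sum_abs _ _).trans (le_of_eq ?_)
      apply Finset.sum_congr rfl
      intro i _
      rw [abs_mul, abs_of_nonneg (Complex.normSq_nonneg _)]
    rw [h3]
    refine (abs_sub _ _).trans ?_
    have := h4 P a
    have := h4 Q c
    simp only [hb]; linarith
  have hμ0 : ∀ k, b k = 0 → μ k = 0 := by
    intro k hk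
    have := hμb k
    rw [hk] at this
    exact abs_nonpos_iff.mp (by linarith)
  -- the sum of b^p
  have hBG : ∑ k, b k ^ p ≤ (∑ i, |a i| ^ p + ∑ i, |c i| ^ p) / 2 := by
    calc ∑ k, b k ^ p ≤ ∑ k, (∑ i, Complex.normSq (P k i) * |a i| ^ p +
          ∑ i, Complex.normSq (Q k i) * |c i| ^ p) / 2 := by
            apply Finset.sum_le_sum
            intro k _
            exact jensen_b hp _ _ a c (fun i => Complex.normSq_nonneg _)
              (fun i => Complex.normSq_nonneg _) (row_sum P hP k) (row_sum Q hQ k)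
      _ = _ := by
        rw [← Finset.sum_div, Finset.sum_add_distrib, Finset.sum_comm,
          Finset.sum_comm (f := fun k i => Complex.normSq (Q k i) * |c i| ^ p)]
        simp only [← Finset.sum_mul, col_sum P hP', col_sum Q hQ', one_mul]
  -- resolvent inequality
  have hres : ∀ s : ℝ, 0 < s → ∑ k, μ k ^ 2 / (s + b k) ≤
      ∑ ij : Fin n × Fin n, Complex.normSq (Y ij.1 ij.2) / (s + (|a ij.1| + |c ij.2|) / 2) := by
    intro s hs
    have hsb : ∀ k, 0 < s + b k := fun k => by linarith [hb0 k]
    rw [Fintype.sum_prod_type]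
    set v : Fin n → ℝ := fun k => μ k / (s + b k) with hv
    set Z := Pᴴ * diagonal (fun k => (v k : ℂ)) * Q with hZ
    have e1 : ∑ i, ∑ j, (Y i j * star (Z i j)).re = ∑ k, μ k * v k := cross_sum P Q hP hQ μ v
    have e2 : ∀ i, ∑ j, Complex.normSq (Z i j) = ∑ k, Complex.normSq (P k i) * v k ^ 2 :=
      row_sq P Q hQ v
    have e3 : ∀ j, ∑ i, Complex.normSq (Z i j) = ∑ k, Complex.normSq (Q k j) * v k ^ 2 :=
      col_sq P Q hP v
    have e4 : ∑ i, ∑ j, (s + (|a i| + |c j|) / 2) * Complex.normSq (Z i j)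
        = ∑ k, (s + b k) * v k ^ 2 := by
      have f1 : ∑ i, ∑ j, (s + |a i| / 2) * Complex.normSq (Z i j)
          = ∑ k, v k ^ 2 * (s + (∑ i, Complex.normSq (P k i) * |a i|) / 2) := by
        simp only [← Finset.mul_sum, e2]
        simp only [Finset.mul_sum]
        rw [Finset.sum_comm]
        apply Finset.sum_congr rfl
        intro k _
        have := row_sum P hP k
        calc _ = v k ^ 2 * (s * ∑ i, Complex.normSq (P k i) +
              (∑ i, Complex.normSq (P k i) * |a i|) / 2) := by
              rw [Finset.mul_sum, Finset.sum_div, ← Finset.sum_add_distrib, Finset.mul_sum]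
              apply Finset.sum_congr rfl
              intro i _
              ring
          _ = _ := by rw [this, mul_one]
      have f2 : ∑ i, ∑ j, |c j| / 2 * Complex.normSq (Z i j)
          = ∑ k, v k ^ 2 * ((∑ i, Complex.normSq (Q k i) * |c i|) / 2) := by
        rw [Finset.sum_comm]
        simp only [← Finset.mul_sum, e3]
        simp only [Finset.mul_sum, Finset.sum_div]
        rw [Finset.sum_comm]
        apply Finset.sum_congr rfl
        intro k _
        apply Finset.sum_congr rfl
        intro i _
        ring
      calc _ = ∑ i, ∑ j, (s + |a i| / 2) * Complex.normSq (Z i j) +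
            ∑ i, ∑ j, |c j| / 2 * Complex.normSq (Z i j) := by
            simp only [← Finset.sum_add_distrib]
            apply Finset.sum_congr rfl
            intro i _
            apply Finset.sum_congr rfl
            intro j _
            ring
        _ = _ := by
            rw [f1, f2, ← Finset.sum_add_distrib]
            apply Finset.sum_congr rfl
            intro k _
            simp only [hb]
            ring
    calc ∑ k, μ k ^ 2 / (s + b k) = 2 * ∑ k, μ k * v k - ∑ k, (s + b k) * v k ^ 2 := by
          rw [Finset.mul_sum, ← Finset.sum_sub_distrib]
          apply Finset.sum_congr rfl
          intro k _
          have := hsb k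
          simp only [hv]
          field_simp
          ring
      _ = ∑ i, ∑ j, (2 * (Y i j * star (Z i j)).re -
            (s + (|a i| + |c j|) / 2) * Complex.normSq (Z i j)) := by
          rw [← e1, ← e4]
          simp only [Finset.sum_sub_distrib, Finset.mul_sum]
      _ ≤ _ := by
          apply Finset.sum_le_sum
          intro i _
          apply Finset.sum_le_sum
          intro j _
          exact quad_tangent _ _ _ (by positivity)
  -- negative power inequality
  have hpow : ∑ k, μ k ^ 2 * b k ^ (p - 2) ≤
      ∑ ij : Fin n × Fin n, Complex.normSq (Y ij.1 ij.2) *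
        ((|a ij.1| + |c ij.2|) / 2) ^ (p - 2) := by
    rcases hp2.eq_or_lt with h2 | h2
    · subst h2
      simp only [sub_self, Real.rpow_zero, mul_one]
      rw [Fintype.sum_prod_type]
      have e2 : ∀ i, ∑ j, Complex.normSq (Y i j) = ∑ k, Complex.normSq (P k i) * μ k ^ 2 :=
        row_sq P Q hQ μ
      simp only [e2]
      rw [Finset.sum_comm]
      simp only [← Finset.sum_mul, row_sum P hP, one_mul, le_refl]
    · have := transfer (2 - p) (by linarith) (by linarith)
        (fun ij : Fin n × Fin n => Complex.normSq (Y ij.1 ij.2))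
        (fun ij => (|a ij.1| + |c ij.2|) / 2) (fun k => μ k ^ 2) b
        (fun ij => by positivity) hb0
        (fun ij hij => by
          have h1 : |a ij.1| = 0 := by
            have := abs_nonneg (a ij.1); have := abs_nonneg (c ij.2); linarith
          have h2 : |c ij.2| = 0 := by
            have := abs_nonneg (a ij.1); have := abs_nonneg (c ij.2); linarith
          simp only [hYn, abs_eq_zero.mp h1, abs_eq_zero.mp h2]; simp)
        (fun k hk => by simp [hμ0 k hk]) hres
      simpa using this
  have hfin : (p - 1) * ∑ k, μ k ^ 2 * b k ^ (p - 2) ≤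
      ∑ i, ∑ j, (oddPow p (a i) - oddPow p (c j)) * (a i - c j) *
      Complex.normSq ((Pᴴ * Q) i j) := by
    refine (mul_le_mul_of_nonneg_left hpow (by linarith)).trans ?_
    rw [Fintype.sum_prod_type, Finset.mul_sum]
    apply Finset.sum_le_sum
    intro i _
    rw [Finset.mul_sum]
    apply Finset.sum_le_sum
    intro j _
    simp only [hYn]
    have := mul_le_mul_of_nonneg_right (two_point hp hp2 (a i) (c j))
      (Complex.normSq_nonneg ((Pᴴ * Q) i j))
    linarith
  refine le_trans (mul_le_mul_of_nonneg_left ?_ (by linarith)) hfin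
  have hB0 : 0 ≤ ∑ k, b k ^ p := Finset.sum_nonneg fun k _ => Real.rpow_nonneg (hb0 k) _
  rcases hB0.eq_or_lt with h0 | h0
  · have hz : ∀ k, μ k = 0 := by
      intro k
      have := (Finset.sum_eq_zero_iff_of_nonneg
        (fun k _ => Real.rpow_nonneg (hb0 k) p)).mp h0.symm k (Finset.mem_univ k)
      exact hμ0 k ((Real.rpow_eq_zero (hb0 k) hp0.ne').mp this)
    simp [hz, Real.zero_rpow hp0.ne', Real.zero_rpow (by positivity : 2 / p ≠ 0)]
  · refine le_trans ?_ (holder_neg hp hp2 μ b hb0 hμ0 h0)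
    apply mul_le_mul_of_nonneg_left _ (by positivity)
    apply Real.rpow_le_rpow_of_nonpos h0 hBG
    apply div_nonpos_of_nonpos_of_nonneg <;> linarith

/-- The unitary matrix diagonalising `A`. -/
noncomputable def eigU {n : ℕ} {A : Matrix (Fin n) (Fin n) ℂ} (hA : A.IsHermitian) :
    Matrix (Fin n) (Fin n) ℂ := (hA.eigenvectorUnitary : Matrix (Fin n) (Fin n) ℂ)

/-- `Tr |A|^p`. -/
noncomputable def spw {n : ℕ} (p : ℝ) {A : Matrix (Fin n) (Fin n) ℂ} (hA : A.IsHermitian) : ℝ :=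
  ∑ i, |hA.eigenvalues i| ^ p

open Matrix in
/-- `sgn(A)|A|^(p-1)`. -/
noncomputable def phiM {n : ℕ} (p : ℝ) {A : Matrix (Fin n) (Fin n) ℂ} (hA : A.IsHermitian) :
    Matrix (Fin n) (Fin n) ℂ :=
  eigU hA * diagonal (fun i => ((oddPow p (hA.eigenvalues i) : ℝ) : ℂ)) * (eigU hA)ᴴ

section
open Matrix
variable {n : ℕ} {A C Y : Matrix (Fin n) (Fin n) ℂ}

lemma eigU_mul (hA : A.IsHermitian) : eigU hA * (eigU hA)ᴴ = 1 := by
  exact Unitary.coe_mul_star_self hA.eigenvectorUnitary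

lemma eigU_mul' (hA : A.IsHermitian) : (eigU hA)ᴴ * eigU hA = 1 := by
  exact Unitary.coe_star_mul_self hA.eigenvectorUnitary

lemma eigU_spec (hA : A.IsHermitian) :
    A = eigU hA * diagonal (fun i => ((hA.eigenvalues i : ℝ) : ℂ)) * (eigU hA)ᴴ := by
  have := hA.spectral_theorem
  rw [Unitary.conjStarAlgAut_apply] at this
  exact this

lemma spw_nonneg (p : ℝ) (hA : A.IsHermitian) : 0 ≤ spw p hA :=
  Finset.sum_nonneg fun i _ => by positivity

lemma spw_eq_zero {p : ℝ} (hp : 1 < p) (hA : A.IsHermitian) : spw p hA = 0 ↔ A = 0 := by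
  rw [← hA.eigenvalues_eq_zero_iff, spw,
    Finset.sum_eq_zero_iff_of_nonneg (fun i _ => by positivity)]
  constructor
  · intro h
    ext i
    have := h i (Finset.mem_univ i)
    rw [Real.rpow_eq_zero (abs_nonneg _) (by linarith)] at this
    simpa using this
  · intro h i _
    rw [h]
    simp [Real.zero_rpow (by linarith : p ≠ 0)]

lemma tr_phi_self {p : ℝ} (hp : 1 < p) (hA : A.IsHermitian) :
    (phiM p hA * A).trace.re = spw p hA := by
  have e : phiM p hA * A = phiM p hA * (eigU hA * diagonal (fun i => ((hA.eigenvalues i : ℝ) : ℂ))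
    * (eigU hA)ᴴ) := by rw [← eigU_spec hA]
  rw [e, phiM, trace_diag, eigU_mul' hA, spw]
  apply Finset.sum_congr rfl
  intro i _
  rw [Finset.sum_eq_single i]
  · rw [one_apply_eq, oddPow_mul_self hp]; simp
  · intro j _ hj
    rw [one_apply_ne hj.symm]; simp
  · simp

lemma tr_phi_other (p : ℝ) (hA : A.IsHermitian) (hC : C.IsHermitian) :
    (phiM p hA * C).trace.re = ∑ i, ∑ j, oddPow p (hA.eigenvalues i) * hC.eigenvalues j *
      Complex.normSq (((eigU hA)ᴴ * eigU hC) i j) := by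
  have e : phiM p hA * C = phiM p hA * (eigU hC * diagonal (fun i => ((hC.eigenvalues i : ℝ) : ℂ))
    * (eigU hC)ᴴ) := by rw [← eigU_spec hC]
  rw [e, phiM, trace_diag]

lemma W_unit (hA : A.IsHermitian) (hC : C.IsHermitian) :
    ((eigU hA)ᴴ * eigU hC) * ((eigU hA)ᴴ * eigU hC)ᴴ = 1 := by
  rw [conjTranspose_mul, conjTranspose_conjTranspose, Matrix.mul_assoc,
    ← Matrix.mul_assoc (eigU hC), eigU_mul, Matrix.one_mul, eigU_mul']

lemma sum_left (hA : A.IsHermitian) (hC : C.IsHermitian) (f : Fin n → ℝ) :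
    ∑ i, ∑ j, f i * Complex.normSq (((eigU hA)ᴴ * eigU hC) i j) = ∑ i, f i := by
  simp only [← Finset.mul_sum, row_sum _ (W_unit hA hC), mul_one]

lemma sum_right (hA : A.IsHermitian) (hC : C.IsHermitian) (f : Fin n → ℝ) :
    ∑ i, ∑ j, f j * Complex.normSq (((eigU hA)ᴴ * eigU hC) i j) = ∑ i, f i := by
  rw [Finset.sum_comm]
  simp only [← Finset.mul_sum, col_sum _ (mul_eq_one_comm.mp (W_unit hA hC)), mul_one]

/-- Klein's inequality. -/
lemma klein {p : ℝ} (hp : 1 < p) (hA : A.IsHermitian) (hC : C.IsHermitian) :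
    spw p hA + p * (phiM p hA * (C - A)).trace.re ≤ spw p hC := by
  rw [Matrix.mul_sub, trace_sub, Complex.sub_re, tr_phi_self hp, tr_phi_other p hA hC]
  have e1 : spw p hA = ∑ i, ∑ j, |hA.eigenvalues i| ^ p *
      Complex.normSq (((eigU hA)ᴴ * eigU hC) i j) :=
    (sum_left hA hC (fun i => |hA.eigenvalues i| ^ p)).symm
  have e2 : spw p hC = ∑ i, ∑ j, |hC.eigenvalues j| ^ p *
      Complex.normSq (((eigU hA)ᴴ * eigU hC) i j) :=
    (sum_right hA hC (fun j => |hC.eigenvalues j| ^ p)).symm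
  rw [e1, e2, ← Finset.sum_sub_distrib, Finset.mul_sum, ← Finset.sum_add_distrib]
  apply Finset.sum_le_sum
  intro i _
  rw [← Finset.sum_sub_distrib, Finset.mul_sum, ← Finset.sum_add_distrib]
  apply Finset.sum_le_sum
  intro j _
  have h1 := mul_le_mul_of_nonneg_right (subgrad hp (hA.eigenvalues i) (hC.eigenvalues j))
    (Complex.normSq_nonneg (((eigU hA)ᴴ * eigU hC) i j))
  have h2 := oddPow_mul_self hp (hA.eigenvalues i)
  generalize Complex.normSq (((eigU hA)ᴴ * eigU hC) i j) = w at h1 ⊢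
  refine le_trans (le_of_eq ?_) h1
  rw [← h2]
  ring

lemma mono_expand {p : ℝ} (hp : 1 < p) (hA : A.IsHermitian) (hC : C.IsHermitian) :
    ((phiM p hA - phiM p hC) * (A - C)).trace.re =
    ∑ i, ∑ j, (oddPow p (hA.eigenvalues i) - oddPow p (hC.eigenvalues j)) *
      (hA.eigenvalues i - hC.eigenvalues j) *
      Complex.normSq (((eigU hA)ᴴ * eigU hC) i j) := by
  rw [Matrix.mul_sub, Matrix.sub_mul, Matrix.sub_mul]
  simp only [trace_sub, Complex.sub_re]
  rw [tr_phi_self hp, tr_phi_self hp, tr_phi_other p hA hC, tr_phi_other p hC hA]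
  have e1 : spw p hA = ∑ i, ∑ j, oddPow p (hA.eigenvalues i) * hA.eigenvalues i *
    Complex.normSq (((eigU hA)ᴴ * eigU hC) i j) := by
    rw [sum_left hA hC (fun i => oddPow p (hA.eigenvalues i) * hA.eigenvalues i)]
    simp only [oddPow_mul_self hp]; rfl
  have e2 : spw p hC = ∑ i, ∑ j, oddPow p (hC.eigenvalues j) * hC.eigenvalues j *
    Complex.normSq (((eigU hA)ᴴ * eigU hC) i j) := by
    rw [sum_right hA hC (fun i => oddPow p (hC.eigenvalues i) * hC.eigenvalues i)]
    simp only [oddPow_mul_self hp]; rfl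
  have e3 : ∀ i j, Complex.normSq (((eigU hC)ᴴ * eigU hA) i j) =
      Complex.normSq (((eigU hA)ᴴ * eigU hC) j i) := by
    intro i j
    have : (eigU hC)ᴴ * eigU hA = ((eigU hA)ᴴ * eigU hC)ᴴ := by
      rw [conjTranspose_mul, conjTranspose_conjTranspose]
    rw [this, conjTranspose_apply, Complex.star_def, Complex.normSq_conj]
  rw [e1, e2]
  simp only [e3]
  rw [Finset.sum_comm (f := fun i j => oddPow p (hC.eigenvalues i) * hA.eigenvalues j *
    Complex.normSq (((eigU hA)ᴴ * eigU hC) j i))]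
  simp only [← Finset.sum_sub_distrib]
  apply Finset.sum_congr rfl
  intro i _
  apply Finset.sum_congr rfl
  intro j _
  ring

lemma strong_mono {p : ℝ} (hp : 1 < p) (hp2 : p ≤ 2) (hA : A.IsHermitian) (hC : C.IsHermitian)
    (hY : Y.IsHermitian) (r : ℝ) (h : A - C = (r : ℂ) • Y) :
    (p - 1) * (r ^ 2 * spw p hY ^ (2 / p) * ((spw p hA + spw p hC) / 2) ^ ((p - 2) / p)) ≤
      ((phiM p hA - phiM p hC) * (A - C)).trace.re := by
  rw [mono_expand hp]
  have hp0 : 0 < p := by linarith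
  have hcore := core hp hp2 ((eigU hY)ᴴ * eigU hA) ((eigU hY)ᴴ * eigU hC) (W_unit hY hA)
    (W_unit hY hC) hA.eigenvalues hC.eigenvalues (fun k => r * hY.eigenvalues k) (by
      have e : diagonal (fun k => ((r * hY.eigenvalues k : ℝ) : ℂ)) =
          (eigU hY)ᴴ * ((r : ℂ) • Y) * eigU hY := by
        have : (eigU hY)ᴴ * Y * eigU hY = diagonal (fun k => ((hY.eigenvalues k : ℝ) : ℂ)) := by
          have e0 : (eigU hY)ᴴ * Y * eigU hY = (eigU hY)ᴴ * (eigU hY *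
              diagonal (fun i => ((hY.eigenvalues i : ℝ) : ℂ)) * (eigU hY)ᴴ) * eigU hY := by
            rw [← eigU_spec hY]
          rw [e0]
          simp only [Matrix.mul_assoc]
          rw [eigU_mul', Matrix.mul_one, ← Matrix.mul_assoc, eigU_mul', Matrix.one_mul]
        rw [Matrix.mul_smul, Matrix.smul_mul, this, ← diagonal_smul]
        congr 1
        ext k
        simp
      rw [e, ← h, Matrix.mul_sub, Matrix.sub_mul]
      have eA : (eigU hY)ᴴ * A * eigU hY = (eigU hY)ᴴ * (eigU hA *
          diagonal (fun i => ((hA.eigenvalues i : ℝ) : ℂ)) * (eigU hA)ᴴ) * eigU hY := by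
        rw [← eigU_spec hA]
      have eC : (eigU hY)ᴴ * C * eigU hY = (eigU hY)ᴴ * (eigU hC *
          diagonal (fun i => ((hC.eigenvalues i : ℝ) : ℂ)) * (eigU hC)ᴴ) * eigU hY := by
        rw [← eigU_spec hC]
      rw [eA, eC]
      simp only [conjTranspose_mul, conjTranspose_conjTranspose, Matrix.mul_assoc])
  have eW : ((eigU hY)ᴴ * eigU hA)ᴴ * ((eigU hY)ᴴ * eigU hC) = (eigU hA)ᴴ * eigU hC := by
    rw [conjTranspose_mul, conjTranspose_conjTranspose, Matrix.mul_assoc,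
      ← Matrix.mul_assoc (eigU hY), eigU_mul, Matrix.one_mul]
  rw [eW] at hcore
  refine le_trans (le_of_eq ?_) hcore
  have eS : (∑ k, |r * hY.eigenvalues k| ^ p) ^ (2 / p) = r ^ 2 * spw p hY ^ (2 / p) := by
    have : ∑ k, |r * hY.eigenvalues k| ^ p = |r| ^ p * spw p hY := by
      rw [spw, Finset.mul_sum]
      apply Finset.sum_congr rfl
      intro k _
      rw [abs_mul, Real.mul_rpow (abs_nonneg _) (abs_nonneg _)]
    rw [this, Real.mul_rpow (by positivity) (spw_nonneg p hY), ← Real.rpow_mul (abs_nonneg _),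
      mul_div_cancel₀ _ hp0.ne']
    norm_num
  rw [eS]
  rfl

end

lemma herm_line {n : ℕ} {x y : Matrix (Fin n) (Fin n) ℂ} (hx : x.IsHermitian) (hy : y.IsHermitian)
    (t : ℝ) : (x + (t : ℂ) • y).IsHermitian := by
  apply hx.add
  rw [Matrix.IsHermitian, Matrix.conjTranspose_smul, hy.eq]
  simp

/-- `(Tr|x+ty|^p + Tr|x-ty|^p)/2`. -/
noncomputable def avgF {n : ℕ} (p : ℝ) {x y : Matrix (Fin n) (Fin n) ℂ} (hx : x.IsHermitian)
    (hy : y.IsHermitian) (t : ℝ) : ℝ :=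
  (spw p (herm_line hx hy t) + spw p (herm_line hx hy (-t))) / 2

lemma avgF_nonneg {n : ℕ} (p : ℝ) {x y : Matrix (Fin n) (Fin n) ℂ} (hx : x.IsHermitian)
    (hy : y.IsHermitian) (t : ℝ) : 0 ≤ avgF p hx hy t := by
  have := spw_nonneg p (herm_line hx hy t)
  have := spw_nonneg p (herm_line hx hy (-t))
  unfold avgF; linarith

lemma avgF_klein {n : ℕ} {p : ℝ} (hp : 1 < p) {x y : Matrix (Fin n) (Fin n) ℂ}
    (hx : x.IsHermitian) (hy : y.IsHermitian) (t δ : ℝ) :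
    avgF p hx hy t + p * δ / 2 *
      ((phiM p (herm_line hx hy t) - phiM p (herm_line hx hy (-t))) * y).trace.re
      ≤ avgF p hx hy (t + δ) := by
  have k1 := klein hp (herm_line hx hy t) (herm_line hx hy (t + δ))
  have k2 := klein hp (herm_line hx hy (-t)) (herm_line hx hy (-(t + δ)))
  have e1 : x + ((t + δ : ℝ) : ℂ) • y - (x + (t : ℂ) • y) = (δ : ℂ) • y := by
    push_cast; module
  have e2 : x + ((-(t + δ) : ℝ) : ℂ) • y - (x + ((-t : ℝ) : ℂ) • y) = ((-δ : ℝ) : ℂ) • y := by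
    push_cast; module
  rw [e1, Matrix.mul_smul, Matrix.trace_smul, smul_eq_mul, Complex.re_ofReal_mul] at k1
  rw [e2, Matrix.mul_smul, Matrix.trace_smul, smul_eq_mul, Complex.re_ofReal_mul] at k2
  rw [Matrix.sub_mul, Matrix.trace_sub, Complex.sub_re]
  unfold avgF
  linarith

lemma avgF_step {n : ℕ} {p : ℝ} (hp : 1 < p) (hp2 : p ≤ 2) {x y : Matrix (Fin n) (Fin n) ℂ}
    (hx : x.IsHermitian) (hy : y.IsHermitian) (t δ : ℝ) (ht : 0 ≤ t) (hδ : 0 ≤ δ) :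
    avgF p hx hy t ^ (2 / p) + 2 * (p - 1) * spw p hy ^ (2 / p) * (t * δ)
      ≤ avgF p hx hy (t + δ) ^ (2 / p) := by
  have hp0 : 0 < p := by linarith
  have k := avgF_klein hp hx hy t δ
  have hF := avgF_nonneg p hx hy t
  rcases ht.eq_or_lt with h0 | h0
  · subst h0
    rw [neg_zero, sub_self] at k
    simp only [Matrix.zero_mul, Matrix.trace_zero, Complex.zero_re, mul_zero, add_zero] at k
    simp only [zero_mul, mul_zero, add_zero]
    exact Real.rpow_le_rpow hF k (by positivity)
  have hsm := strong_mono hp hp2 (herm_line hx hy t) (herm_line hx hy (-t)) hy (2 * t) (by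
    push_cast; module)
  have e1 : x + (t : ℂ) • y - (x + ((-t : ℝ) : ℂ) • y) = ((2 * t : ℝ) : ℂ) • y := by
    push_cast; module
  rw [e1, Matrix.mul_smul, Matrix.trace_smul, smul_eq_mul, Complex.re_ofReal_mul] at hsm
  set g := ((phiM p (herm_line hx hy t) - phiM p (herm_line hx hy (-t))) * y).trace.re
  change (p - 1) * ((2 * t) ^ 2 * spw p hy ^ (2 / p) * (avgF p hx hy t) ^ ((p - 2) / p)) ≤
    2 * t * g at hsm
  set K := spw p hy ^ (2 / p) with hK
  have hK0 : 0 ≤ K := Real.rpow_nonneg (spw_nonneg p hy) _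
  set F := avgF p hx hy t with hFdef
  rcases hF.eq_or_lt with hF0 | hF0
  · have a1 := spw_nonneg p (herm_line hx hy t)
    have a2 := spw_nonneg p (herm_line hx hy (-t))
    have a3 : (spw p (herm_line hx hy t) + spw p (herm_line hx hy (-t))) / 2 = 0 := hF0.symm
    have b1 := (spw_eq_zero hp (herm_line hx hy t)).mp (by linarith)
    have b2 := (spw_eq_zero hp (herm_line hx hy (-t))).mp (by linarith)
    rw [b1, b2, sub_zero] at e1
    have hy0 : y = 0 := by
      rcases smul_eq_zero.mp e1.symm with h | h
      · have : (2 * t : ℝ) = 0 := by exact_mod_cast h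
        linarith
      · exact h
    have hK' : K = 0 := by
      rw [hK, (spw_eq_zero hp hy).mpr hy0, Real.zero_rpow (by positivity)]
    rw [← hF0, hK', Real.zero_rpow (by positivity)]
    simp only [mul_zero, zero_mul, add_zero]
    exact Real.rpow_nonneg (avgF_nonneg p hx hy _) _
  · have hg : 2 * t * (p - 1) * K * F ^ ((p - 2) / p) ≤ g := by
      have h2t : 0 < 2 * t := by linarith
      refine le_of_mul_le_mul_left ?_ h2t
      linarith
    have e3 : F ^ ((p - 2) / p) = F * (F ^ (2 / p))⁻¹ := by
      rw [show (p - 2) / p = 1 - 2 / p by field_simp, Real.rpow_sub hF0, Real.rpow_one]; rfl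
    have hFp : 0 < F ^ (2 / p) := Real.rpow_pos_of_pos hF0 _
    set s := p * δ * t * (p - 1) * K * (F ^ (2 / p))⁻¹ with hs
    have hp1 : 0 ≤ p - 1 := by linarith
    have hs0 : 0 ≤ s := by positivity
    have h4 : F * (1 + s) ≤ avgF p hx hy (t + δ) := by
      refine le_trans ?_ k
      have := mul_le_mul_of_nonneg_left hg (by positivity : 0 ≤ p * δ / 2)
      rw [e3] at this
      calc F * (1 + s) = F + p * δ / 2 * (2 * t * (p - 1) * K * (F * (F ^ (2 / p))⁻¹)) := by
            rw [hs]; ring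
        _ ≤ _ := by linarith
    calc F ^ (2 / p) + 2 * (p - 1) * K * (t * δ) = F ^ (2 / p) * (1 + 2 / p * s) := by
          rw [hs]; field_simp
      _ ≤ F ^ (2 / p) * (1 + s) ^ (2 / p) := by
          apply mul_le_mul_of_nonneg_left _ hFp.le
          exact one_add_mul_self_le_rpow_one_add (by linarith) (by rw [le_div_iff₀ hp0]; linarith)
      _ = (F * (1 + s)) ^ (2 / p) := by rw [Real.mul_rpow hF0.le (by linarith)]
      _ ≤ _ := Real.rpow_le_rpow (by positivity) h4 (by positivity)

lemma avgF_induct {n : ℕ} {p : ℝ} (hp : 1 < p) (hp2 : p ≤ 2) {x y : Matrix (Fin n) (Fin n) ℂ}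
    (hx : x.IsHermitian) (hy : y.IsHermitian) (δ : ℝ) (hδ : 0 ≤ δ) (i : ℕ) :
    avgF p hx hy 0 ^ (2 / p) + (p - 1) * spw p hy ^ (2 / p) * (i * (i - 1) * δ ^ 2)
      ≤ avgF p hx hy (i * δ) ^ (2 / p) := by
  induction i with
  | zero => simp
  | succ i ih =>
    have := avgF_step hp hp2 hx hy (i * δ) δ (by positivity) hδ
    push_cast
    rw [add_mul (i : ℝ) 1 δ, one_mul]
    refine le_trans (le_of_eq ?_) ((add_le_add_left ih _).trans this)
    ring

lemma avgF_main {n : ℕ} {p : ℝ} (hp : 1 < p) (hp2 : p ≤ 2) {x y : Matrix (Fin n) (Fin n) ℂ}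
    (hx : x.IsHermitian) (hy : y.IsHermitian) :
    avgF p hx hy 0 ^ (2 / p) + (p - 1) * spw p hy ^ (2 / p) ≤ avgF p hx hy 1 ^ (2 / p) := by
  have hlim : Filter.Tendsto (fun N : ℕ => avgF p hx hy 0 ^ (2 / p) +
      (p - 1) * spw p hy ^ (2 / p) * (1 - 1 / (N : ℝ))) Filter.atTop
      (nhds (avgF p hx hy 0 ^ (2 / p) + (p - 1) * spw p hy ^ (2 / p) * (1 - 0))) :=
    ((tendsto_const_nhds.sub tendsto_one_div_atTop_nhds_zero_nat).const_mul _).const_add _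
  rw [sub_zero, mul_one] at hlim
  refine le_of_tendsto hlim ?_
  filter_upwards [Filter.eventually_ge_atTop 1] with N hN
  have hN' : (0:ℝ) < N := by exact_mod_cast hN
  have := avgF_induct hp hp2 hx hy (1 / (N : ℝ)) (by positivity) N
  rw [mul_one_div_cancel hN'.ne'] at this
  refine le_trans (le_of_eq ?_) this
  congr 2
  field_simp

lemma norm_sq_eq {n : ℕ} {p : ℝ} (_hp : 1 < p) {a : Matrix (Fin n) (Fin n) ℂ} (ha : a.IsHermitian) :
    hermitianSchattenNorm p a ^ 2 = spw p ha ^ (2 / p) := by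
  unfold hermitianSchattenNorm
  rw [dif_pos ha]
  change (spw p ha ^ (1 / p)) ^ 2 = _
  rw [← Real.rpow_natCast, ← Real.rpow_mul (spw_nonneg p ha)]
  congr 1
  push_cast
  ring

/-- **Ball–Carlen–Lieb convexity inequality** for Hermitian matrices, `1 < p ≤ 2`:
`‖x+y‖_p² + ‖x−y‖_p² ≥ 2‖x‖_p² + 2(p−1)‖y‖_p²`. -/
theorem bcl_matrix_le_two {n : ℕ} (hn : 1 ≤ n) (p : ℝ) (hp1 : 1 < p) (hp2 : p ≤ 2)
    (x y : Matrix (Fin n) (Fin n) ℂ) (hx : x.IsHermitian) (hy : y.IsHermitian) :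
    hermitianSchattenNorm p (x + y) ^ 2 + hermitianSchattenNorm p (x - y) ^ 2
    ≥ 2 * hermitianSchattenNorm p x ^ 2 + 2 * (p - 1) * hermitianSchattenNorm p y ^ 2 := by
  have hp0 : 0 < p := by linarith
  have main := avgF_main hp1 hp2 hx hy
  have e0 : avgF p hx hy 0 ^ (2 / p) = hermitianSchattenNorm p x ^ 2 := by
    have hx0 : x + ((0 : ℝ) : ℂ) • y = x := by simp
    have h := norm_sq_eq hp1 (herm_line hx hy 0)
    have h' : hermitianSchattenNorm p x ^ 2 = hermitianSchattenNorm p (x + ((0 : ℝ) : ℂ) • y) ^ 2 := by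
      rw [hx0]
    have h0 : spw p (herm_line hx hy (-0)) = spw p (herm_line hx hy 0) := by
      rw [neg_zero]
    have h1 : avgF p hx hy 0 =
        (spw p (herm_line hx hy 0) + spw p (herm_line hx hy (-0))) / 2 := rfl
    rw [h', h, h1, h0]
    congr 1
    ring
  have e1 : spw p (herm_line hx hy 1) ^ (2 / p) = hermitianSchattenNorm p (x + y) ^ 2 := by
    rw [← norm_sq_eq hp1]; simp
  have e2 : spw p (herm_line hx hy (-1)) ^ (2 / p) = hermitianSchattenNorm p (x - y) ^ 2 := by
    rw [← norm_sq_eq hp1]; simp [sub_eq_add_neg]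
  rw [e0, ← norm_sq_eq hp1 hy] at main
  have hc := (convexOn_rpow (p := 2 / p) (by rw [le_div_iff₀ hp0]; linarith)).2
    (Set.mem_Ici.mpr (spw_nonneg p (herm_line hx hy 1)))
    (Set.mem_Ici.mpr (spw_nonneg p (herm_line hx hy (-1))))
    (by norm_num : (0:ℝ) ≤ 1/2) (by norm_num : (0:ℝ) ≤ 1/2) (by norm_num)
  simp only [smul_eq_mul] at hc
  rw [e1, e2] at hc
  have e3 : avgF p hx hy 1 = 1 / 2 * spw p (herm_line hx hy 1) +
      1 / 2 * spw p (herm_line hx hy (-1)) := by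
    unfold avgF; ring
  rw [e3] at main
  linarith
end

section
/- Let n ≥ 1, let 2 < p < ∞, and let x, y be Hermitian n×n complex matrices. Then ‖x+y‖_p² + ‖x−y‖_p² ≤ 2‖x‖_p² + 2(p−1)‖y‖_p², where for a Hermitian matrix a, ‖a‖_p := (∑_{i=1}^n |λ_i(a)|^p)^{1/p} and λ_1(a), …, λ_n(a) are the eigenvalues of a counted with multiplicity. -/
open scoped BigOperators

lemma bcl_row {n : ℕ} {α : Matrix (Fin n) (Fin n) ℂ} (hα : α ∈ Matrix.unitaryGroup (Fin n) ℂ)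
    (i : Fin n) : ∑ j, ‖α i j‖ ^ 2 = 1 := by
  have h := congrFun (congrFun (Matrix.mem_unitaryGroup_iff.mp hα) i) i
  simp only [Matrix.mul_apply, Matrix.star_apply, Matrix.one_apply_eq, RCLike.star_def,
    Complex.mul_conj'] at h
  exact_mod_cast h

lemma bcl_col {n : ℕ} {α : Matrix (Fin n) (Fin n) ℂ} (hα : α ∈ Matrix.unitaryGroup (Fin n) ℂ)
    (j : Fin n) : ∑ i, ‖α i j‖ ^ 2 = 1 := by
  have h := congrFun (congrFun (Matrix.mem_unitaryGroup_iff'.mp hα) j) j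
  simp only [Matrix.mul_apply, Matrix.star_apply, Matrix.one_apply_eq, RCLike.star_def,
    Complex.conj_mul'] at h
  exact_mod_cast h

noncomputable def bclM {n : ℕ} (α β : Matrix (Fin n) (Fin n) ℂ) (κ : Fin n → ℝ) :
    Matrix (Fin n) (Fin n) ℂ := α * Matrix.diagonal (fun k => (κ k : ℂ)) * β

lemma bclM_row {n : ℕ} (α β : Matrix (Fin n) (Fin n) ℂ)
    (hβ : β ∈ Matrix.unitaryGroup (Fin n) ℂ) (κ w : Fin n → ℝ) (i : Fin n) :
    ∑ j, (star (bclM α β w i j) * bclM α β κ i j).re = ∑ k, ‖α i k‖ ^ 2 * (w k * κ k) := by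
  have h1 : bclM α β κ * star (bclM α β w) =
      α * Matrix.diagonal (fun k => ((w k * κ k : ℝ) : ℂ)) * star α := by
    have h2 := Matrix.mem_unitaryGroup_iff.mp hβ
    have h3 : star (Matrix.diagonal (fun k => (w k : ℂ))) = Matrix.diagonal (fun k => (w k : ℂ)) := by
      rw [Matrix.star_eq_conjTranspose, Matrix.diagonal_conjTranspose]
      congr 1; funext k; simp
    unfold bclM
    rw [star_mul, star_mul, h3]
    calc _ = α * Matrix.diagonal (fun k => (κ k : ℂ)) * (β * star β) *
          Matrix.diagonal (fun k => (w k : ℂ)) * star α := by simp only [mul_assoc]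
      _ = _ := by
        rw [h2, mul_one, mul_assoc α, Matrix.diagonal_mul_diagonal]
        congr 3; funext k; push_cast; ring
  have h := congrArg Complex.re (congrFun (congrFun h1 i) i)
  simp only [Matrix.mul_apply (N := star _), Matrix.star_apply, Matrix.mul_diagonal, Complex.re_sum] at h
  simp only [mul_comm (star _)]
  rw [h]
  refine Finset.sum_congr rfl fun k _ => ?_
  rw [mul_right_comm, RCLike.star_def, Complex.mul_conj']
  norm_cast

lemma bclM_col {n : ℕ} (α β : Matrix (Fin n) (Fin n) ℂ)
    (hα : α ∈ Matrix.unitaryGroup (Fin n) ℂ) (κ w : Fin n → ℝ) (j : Fin n) :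
    ∑ i, (star (bclM α β w i j) * bclM α β κ i j).re = ∑ k, ‖β k j‖ ^ 2 * (w k * κ k) := by
  have h1 : star (bclM α β w) * bclM α β κ =
      star β * (Matrix.diagonal (fun k => ((w k * κ k : ℝ) : ℂ)) * β) := by
    have h2 := Matrix.mem_unitaryGroup_iff'.mp hα
    have h3 : star (Matrix.diagonal (fun k => (w k : ℂ))) = Matrix.diagonal (fun k => (w k : ℂ)) := by
      rw [Matrix.star_eq_conjTranspose, Matrix.diagonal_conjTranspose]
      congr 1; funext k; simp
    unfold bclM
    rw [star_mul, star_mul, h3]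
    calc _ = star β * (Matrix.diagonal (fun k => (w k : ℂ)) * (star α * α) *
          Matrix.diagonal (fun k => (κ k : ℂ)) * β) := by simp only [mul_assoc]
      _ = _ := by
        rw [h2, mul_one, Matrix.diagonal_mul_diagonal]
        push_cast; rfl
  have h := congrArg Complex.re (congrFun (congrFun h1 j) j)
  simp only [Matrix.mul_apply (M := star _), Matrix.star_apply, Matrix.diagonal_mul,
    Complex.re_sum] at h
  rw [h]
  refine Finset.sum_congr rfl fun k _ => ?_
  rw [mul_left_comm, RCLike.star_def, Complex.conj_mul']
  norm_cast
  ring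

lemma bcl_re_self (z : ℂ) : (star z * z).re = ‖z‖ ^ 2 := by
  rw [RCLike.star_def, Complex.conj_mul']; norm_cast

lemma bclM_row_sq {n : ℕ} (α β : Matrix (Fin n) (Fin n) ℂ)
    (hβ : β ∈ Matrix.unitaryGroup (Fin n) ℂ) (κ : Fin n → ℝ) (i : Fin n) :
    ∑ j, ‖bclM α β κ i j‖ ^ 2 = ∑ k, ‖α i k‖ ^ 2 * κ k ^ 2 := by
  have := bclM_row α β hβ κ κ i
  simpa only [bcl_re_self, ← pow_two] using this

lemma bclM_col_sq {n : ℕ} (α β : Matrix (Fin n) (Fin n) ℂ)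
    (hα : α ∈ Matrix.unitaryGroup (Fin n) ℂ) (κ : Fin n → ℝ) (j : Fin n) :
    ∑ i, ‖bclM α β κ i j‖ ^ 2 = ∑ k, ‖β k j‖ ^ 2 * κ k ^ 2 := by
  have := bclM_col α β hα κ κ j
  simpa only [bcl_re_self, ← pow_two] using this

lemma bcl_pt (y w : ℂ) (c : ℝ) (hc : 0 < c) :
    2 * (star w * y).re - c * ‖w‖ ^ 2 ≤ ‖y‖ ^ 2 / c := by
  rw [le_div_iff₀ hc]
  have h : 0 ≤ ‖y - c * w‖ ^ 2 := by positivity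
  simp only [Complex.sq_norm, Complex.normSq_apply] at h ⊢
  simp at h ⊢
  nlinarith

/-- resolvent form -/
lemma bcl_resolvent {n : ℕ} (α β : Matrix (Fin n) (Fin n) ℂ)
    (hα : α ∈ Matrix.unitaryGroup (Fin n) ℂ) (hβ : β ∈ Matrix.unitaryGroup (Fin n) ℂ)
    (κ c d : Fin n → ℝ) (hc : ∀ i, 0 ≤ c i) (hd : ∀ j, 0 ≤ d j) (u : ℝ) (hu : 0 < u) :
    ∑ k, κ k ^ 2 * (u + (∑ i, c i * ‖α i k‖ ^ 2 + ∑ j, d j * ‖β k j‖ ^ 2))⁻¹ ≤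
    ∑ i, ∑ j, ‖bclM α β κ i j‖ ^ 2 * (u + (c i + d j))⁻¹ := by
  set D : Fin n → ℝ := fun k => ∑ i, c i * ‖α i k‖ ^ 2 + ∑ j, d j * ‖β k j‖ ^ 2 with hD
  have hDn : ∀ k, 0 ≤ D k := fun k => add_nonneg
    (Finset.sum_nonneg fun i _ => mul_nonneg (hc i) (by positivity))
    (Finset.sum_nonneg fun i _ => mul_nonneg (hd i) (by positivity))
  set w : Fin n → ℝ := fun k => κ k / (u + D k) with hw
  have e1 : ∑ i, ∑ j, (star (bclM α β w i j) * bclM α β κ i j).re = ∑ k, w k * κ k := by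
    simp only [bclM_row α β hβ κ w]
    rw [Finset.sum_comm]
    simp only [← Finset.sum_mul, bcl_col hα, one_mul]
  have e0 : ∑ i, ∑ j, ‖bclM α β w i j‖ ^ 2 = ∑ k, w k ^ 2 := by
    simp only [bclM_row_sq α β hβ w]
    rw [Finset.sum_comm]
    simp only [← Finset.sum_mul, bcl_col hα, one_mul]
  have e2 : ∑ i, ∑ j, c i * ‖bclM α β w i j‖ ^ 2 = ∑ k, (∑ i, c i * ‖α i k‖ ^ 2) * w k ^ 2 := by
    simp only [← Finset.mul_sum, bclM_row_sq α β hβ w]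
    simp only [Finset.mul_sum, Finset.sum_mul]
    rw [Finset.sum_comm]
    simp only [mul_assoc]
  have e3 : ∑ i, ∑ j, d j * ‖bclM α β w i j‖ ^ 2 = ∑ k, (∑ j, d j * ‖β k j‖ ^ 2) * w k ^ 2 := by
    rw [Finset.sum_comm]
    simp only [← Finset.mul_sum, bclM_col_sq α β hα w]
    simp only [Finset.mul_sum, Finset.sum_mul]
    rw [Finset.sum_comm]
    simp only [mul_assoc]
  have key : ∑ i, ∑ j, (2 * (star (bclM α β w i j) * bclM α β κ i j).re
      - (u + (c i + d j)) * ‖bclM α β w i j‖ ^ 2) ≤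
      ∑ i, ∑ j, ‖bclM α β κ i j‖ ^ 2 * (u + (c i + d j))⁻¹ := by
    refine Finset.sum_le_sum fun i _ => Finset.sum_le_sum fun j _ => ?_
    rw [← div_eq_mul_inv]
    exact bcl_pt _ _ _ (by have := hc i; have := hd j; linarith)
  refine le_trans (le_of_eq ?_) key
  simp only [Finset.sum_sub_distrib, add_mul, Finset.sum_add_distrib, ← Finset.mul_sum, e1, e0]
  have e2' := e2
  simp only [← Finset.mul_sum] at e2'
  rw [e2', e3]
  simp only [Finset.mul_sum]
  rw [← Finset.sum_add_distrib, ← Finset.sum_add_distrib, ← Finset.sum_sub_distrib]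
  refine Finset.sum_congr rfl fun k _ => ?_
  have h0 : u + D k ≠ 0 := by have := hDn k; positivity
  have h1 : (∑ i, c i * ‖α i k‖ ^ 2) = D k - ∑ j, d j * ‖β k j‖ ^ 2 := by simp [hD]
  rw [h1]
  rw [sub_add_cancel]
  have h2 : w k = κ k / (u + D k) := rfl
  rw [h2]
  generalize D k = X at h0
  generalize ∑ j, d j * ‖β k j‖ ^ 2 = Z
  field_simp
  ring

lemma bcl_core {n : ℕ} (α β : Matrix (Fin n) (Fin n) ℂ)
    (hα : α ∈ Matrix.unitaryGroup (Fin n) ℂ) (hβ : β ∈ Matrix.unitaryGroup (Fin n) ℂ)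
    (κ c d : Fin n → ℝ) (hc : ∀ i, 0 ≤ c i) (hd : ∀ j, 0 ≤ d j) (r : ℝ)
    (hr : r ∈ Set.Ioo (0:ℝ) 1) :
    ∑ i, ∑ j, (c i + d j) ^ r * ‖bclM α β κ i j‖ ^ 2 ≤
    ∑ k, (∑ i, c i * ‖α i k‖ ^ 2 + ∑ j, d j * ‖β k j‖ ^ 2) ^ r * κ k ^ 2 := by
  obtain ⟨μ, hμ⟩ := Real.exists_measure_rpow_eq_integral_rpowIntegrand₀₁ hr
  set D : Fin n → ℝ := fun k => ∑ i, c i * ‖α i k‖ ^ 2 + ∑ j, d j * ‖β k j‖ ^ 2 with hD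
  have hDn : ∀ k, 0 ≤ D k := fun k => add_nonneg
    (Finset.sum_nonneg fun i _ => mul_nonneg (hc i) (by positivity))
    (Finset.sum_nonneg fun i _ => mul_nonneg (hd i) (by positivity))
  have hcd : ∀ i j, 0 ≤ c i + d j := fun i j => add_nonneg (hc i) (hd j)
  have tot : ∑ i, ∑ j, ‖bclM α β κ i j‖ ^ 2 = ∑ k, κ k ^ 2 := by
    simp only [bclM_row_sq α β hβ κ]
    rw [Finset.sum_comm]
    simp only [← Finset.sum_mul, bcl_col hα, one_mul]
  have L : ∑ i, ∑ j, (c i + d j) ^ r * ‖bclM α β κ i j‖ ^ 2 =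
      ∫ t in Set.Ioi 0, ∑ i, ∑ j, Real.rpowIntegrand₀₁ r t (c i + d j) * ‖bclM α β κ i j‖ ^ 2 ∂μ := by
    rw [MeasureTheory.integral_finsetSum]
    · refine Finset.sum_congr rfl fun i _ => ?_
      rw [MeasureTheory.integral_finsetSum]
      · refine Finset.sum_congr rfl fun j _ => ?_
        rw [MeasureTheory.integral_mul_const, (hμ _ (hcd i j)).2]
      · intro j _
        exact (hμ _ (hcd i j)).1.mul_const _
    · intro i _
      exact MeasureTheory.integrable_finsetSum _ fun j _ => (hμ _ (hcd i j)).1.mul_const _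
  have R : ∑ k, D k ^ r * κ k ^ 2 =
      ∫ t in Set.Ioi 0, ∑ k, Real.rpowIntegrand₀₁ r t (D k) * κ k ^ 2 ∂μ := by
    rw [MeasureTheory.integral_finsetSum]
    · refine Finset.sum_congr rfl fun j _ => ?_
      rw [MeasureTheory.integral_mul_const, (hμ _ (hDn j)).2]
    · intro j _
      exact (hμ _ (hDn j)).1.mul_const _
  rw [L, R]
  refine MeasureTheory.setIntegral_mono_on ?_ ?_ measurableSet_Ioi ?_
  · exact MeasureTheory.integrable_finsetSum _ fun i _ =>
      MeasureTheory.integrable_finsetSum _ fun j _ => (hμ _ (hcd i j)).1.mul_const _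
  · exact MeasureTheory.integrable_finsetSum _ fun j _ => (hμ _ (hDn j)).1.mul_const _
  · intro t ht
    have h := bcl_resolvent α β hα hβ κ c d hc hd t ht
    have htr : 0 ≤ t ^ r := Real.rpow_nonneg (le_of_lt ht) _
    have e1 : ∑ i, ∑ j, Real.rpowIntegrand₀₁ r t (c i + d j) * ‖bclM α β κ i j‖ ^ 2 =
       t ^ r * (t⁻¹ * ∑ k, κ k ^ 2 - ∑ i, ∑ j, ‖bclM α β κ i j‖ ^ 2 * (t + (c i + d j))⁻¹) := by
      rw [← tot]
      simp only [Finset.mul_sum, mul_sub, ← Finset.sum_sub_distrib, Real.rpowIntegrand₀₁]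
      refine Finset.sum_congr rfl fun i _ => Finset.sum_congr rfl fun j _ => ?_
      ring
    have e2 : ∑ k, Real.rpowIntegrand₀₁ r t (D k) * κ k ^ 2 =
       t ^ r * (t⁻¹ * ∑ k, κ k ^ 2 - ∑ k, κ k ^ 2 * (t + D k)⁻¹) := by
      simp only [Finset.mul_sum, mul_sub, ← Finset.sum_sub_distrib, Real.rpowIntegrand₀₁]
      refine Finset.sum_congr rfl fun i _ => ?_
      ring
    rw [e1, e2]
    exact mul_le_mul_of_nonneg_left (by linarith) htr

lemma bcl_holder {ι : Type*} (s : Finset ι) (w f g : ι → ℝ) (hw : ∀ i, 0 ≤ w i)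
    (hf : ∀ i, 0 ≤ f i) (hg : ∀ i, 0 ≤ g i) (r M Y : ℝ) (hr : 0 < r) (hM : 0 ≤ M) (hY : 0 ≤ Y)
    (h1 : ∑ i ∈ s, w i * f i ^ (r + 2) ≤ M ^ (r + 2))
    (h2 : ∑ i ∈ s, w i * g i ^ (r + 2) ≤ Y ^ (r + 2)) :
    ∑ i ∈ s, w i * (f i ^ r * g i ^ 2) ≤ M ^ r * Y ^ 2 := by
  have hp : 0 < r + 2 := by linarith
  have hc : Real.HolderConjugate ((r + 2) / r) ((r + 2) / 2) := by
    rw [Real.holderConjugate_iff]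
    refine ⟨by rw [lt_div_iff₀ hr]; linarith, by field_simp⟩
  have key := Real.inner_le_Lp_mul_Lq_of_nonneg s hc
    (f := fun i => w i ^ (r / (r + 2)) * f i ^ r) (g := fun i => w i ^ (2 / (r + 2)) * g i ^ (2:ℝ))
    (fun i _ => mul_nonneg (Real.rpow_nonneg (hw i) _) (Real.rpow_nonneg (hf i) _))
    (fun i _ => mul_nonneg (Real.rpow_nonneg (hw i) _) (Real.rpow_nonneg (hg i) _))
  have e0 : ∀ i, w i * (f i ^ r * g i ^ 2) =
      w i ^ (r / (r + 2)) * f i ^ r * (w i ^ (2 / (r + 2)) * g i ^ (2:ℝ)) := by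
    intro i
    have : w i = w i ^ (r / (r + 2)) * w i ^ (2 / (r + 2)) := by
      rw [← Real.rpow_add_of_nonneg (hw i) (by positivity) (by positivity), ← add_div,
        div_self hp.ne', Real.rpow_one]
    rw [Real.rpow_two]
    nth_rewrite 1 [this]
    ring
  have e1 : ∀ i, (w i ^ (r / (r + 2)) * f i ^ r) ^ ((r + 2) / r) = w i * f i ^ (r + 2) := by
    intro i
    rw [Real.mul_rpow (Real.rpow_nonneg (hw i) _) (Real.rpow_nonneg (hf i) _),
      ← Real.rpow_mul (hw i), ← Real.rpow_mul (hf i)]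
    congr 1
    · rw [show r / (r + 2) * ((r + 2) / r) = 1 by field_simp, Real.rpow_one]
    · congr 1; field_simp
  have e2 : ∀ i, (w i ^ (2 / (r + 2)) * g i ^ (2:ℝ)) ^ ((r + 2) / 2) = w i * g i ^ (r + 2) := by
    intro i
    rw [Real.mul_rpow (Real.rpow_nonneg (hw i) _) (Real.rpow_nonneg (hg i) _),
      ← Real.rpow_mul (hw i), ← Real.rpow_mul (hg i)]
    congr 1
    · rw [show 2 / (r + 2) * ((r + 2) / 2) = 1 by field_simp, Real.rpow_one]
    · congr 1; field_simp
  simp only [e1, e2, ← e0] at key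
  refine key.trans ?_
  have n1 : 0 ≤ ∑ i ∈ s, w i * f i ^ (r + 2) :=
    Finset.sum_nonneg fun i _ => mul_nonneg (hw i) (Real.rpow_nonneg (hf i) _)
  have n2 : 0 ≤ ∑ i ∈ s, w i * g i ^ (r + 2) :=
    Finset.sum_nonneg fun i _ => mul_nonneg (hw i) (Real.rpow_nonneg (hg i) _)
  have f1 := Real.rpow_le_rpow n1 h1 (show 0 ≤ 1 / ((r + 2) / r) by positivity)
  have f2 := Real.rpow_le_rpow n2 h2 (show 0 ≤ 1 / ((r + 2) / 2) by positivity)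
  rw [← Real.rpow_mul hM, show (r + 2) * (1 / ((r + 2) / r)) = r by field_simp] at f1
  rw [← Real.rpow_mul hY, show (r + 2) * (1 / ((r + 2) / 2)) = 2 by field_simp, Real.rpow_two] at f2
  exact mul_le_mul f1 f2 (Real.rpow_nonneg n2 _) (Real.rpow_nonneg hM _)

lemma bcl_pinch {n : ℕ} (W : Fin n → Fin n → ℝ) (hW : ∀ i k, 0 ≤ W i k)
    (h1 : ∀ k, ∑ i, W i k = 1) (h2 : ∀ i, ∑ k, W i k = 1) (l : Fin n → ℝ)
    (p : ℝ) (hp : 1 ≤ p) :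
    ∑ k, |∑ i, l i * W i k| ^ p ≤ ∑ i, |l i| ^ p := by
  calc ∑ k, |∑ i, l i * W i k| ^ p ≤ ∑ k, ∑ i, W i k * |l i| ^ p := by
        refine Finset.sum_le_sum fun k _ => ?_
        refine le_trans ?_ (Real.rpow_arith_mean_le_arith_mean_rpow Finset.univ (fun i => W i k)
          (fun i => |l i|) (fun i _ => hW i k) (h1 k) (fun i _ => abs_nonneg _) hp)
        refine Real.rpow_le_rpow (abs_nonneg _) ?_ (by linarith)
        refine (Finset.abs_sum_le_sum_abs _ _).trans (le_of_eq ?_)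
        refine Finset.sum_congr rfl fun i _ => ?_
        rw [abs_mul, abs_of_nonneg (hW i k), mul_comm]
    _ = _ := by
        rw [Finset.sum_comm]
        simp only [← Finset.sum_mul, h2, one_mul]

lemma bcl_conv (a b s p : ℝ) (ha : 0 ≤ a) (hb : 0 ≤ b) (hs0 : 0 ≤ s) (hs1 : s ≤ 1) (hp : 1 ≤ p) :
    ((1 - s) * a + s * b) ^ p ≤ (1 - s) * a ^ p + s * b ^ p := by
  have h1 : (0:ℝ) ≤ 1 - s := by linarith
  have h2 : 1 - s + s = 1 := by ring
  have := (convexOn_rpow hp).2 (Set.mem_Ici.mpr ha) (Set.mem_Ici.mpr hb) h1 hs0 h2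
  simpa using this

lemma bcl_perS {n : ℕ} (α β : Matrix (Fin n) (Fin n) ℂ)
    (hα : α ∈ Matrix.unitaryGroup (Fin n) ℂ) (hβ : β ∈ Matrix.unitaryGroup (Fin n) ℂ)
    (κ l m : Fin n → ℝ) (r M Y s : ℝ) (hr : 0 < r) (hM : 0 ≤ M) (hY : 0 ≤ Y)
    (hs0 : 0 ≤ s) (hs1 : s ≤ 1)
    (hl : ∑ i, |l i| ^ (r + 2) ≤ M ^ (r + 2)) (hm : ∑ i, |m i| ^ (r + 2) ≤ M ^ (r + 2))
    (hk : ∑ i, |κ i| ^ (r + 2) ≤ Y ^ (r + 2)) :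
    ∑ i, ∑ j, |(1 - s) * l i + s * m j| ^ r * ‖bclM α β κ i j‖ ^ 2 ≤ M ^ r * Y ^ 2 := by
  have hs1' : 0 ≤ 1 - s := by linarith
  have habs : ∀ i j, |(1 - s) * l i + s * m j| ≤ (1 - s) * |l i| + s * |m j| := by
    intro i j
    refine (abs_add_le _ _).trans (le_of_eq ?_)
    rw [abs_mul, abs_mul, abs_of_nonneg hs0, abs_of_nonneg hs1']
  rcases lt_or_ge r 1 with hr1 | hr1
  · calc _ ≤ ∑ i, ∑ j, ((1 - s) * |l i| + s * |m j|) ^ r * ‖bclM α β κ i j‖ ^ 2 := by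
          refine Finset.sum_le_sum fun i _ => Finset.sum_le_sum fun j _ => ?_
          exact mul_le_mul_of_nonneg_right (Real.rpow_le_rpow (abs_nonneg _) (habs i j) hr.le)
            (by positivity)
      _ ≤ _ := bcl_core α β hα hβ κ (fun i => (1 - s) * |l i|) (fun j => s * |m j|)
          (fun i => by positivity) (fun i => by positivity) r ⟨hr, hr1⟩
      _ = ∑ k, 1 * (((1 - s) * |∑ i, |l i| * ‖α i k‖ ^ 2| + s * |∑ j, |m j| * ‖β k j‖ ^ 2|) ^ r
            * |κ k| ^ 2) := by
          refine Finset.sum_congr rfl fun k _ => ?_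
          rw [one_mul, sq_abs, abs_of_nonneg (Finset.sum_nonneg fun i _ => by positivity),
            abs_of_nonneg (Finset.sum_nonneg fun i _ => by positivity)]
          simp only [Finset.mul_sum, mul_assoc]
      _ ≤ _ := by
          refine bcl_holder Finset.univ (fun _ => 1) _ _ (fun _ => zero_le_one)
            (fun k => by positivity) (fun k => abs_nonneg _) r M Y hr hM hY ?_ (by simpa using hk)
          have p1 := bcl_pinch (fun i k => ‖α i k‖ ^ 2) (fun _ _ => by positivity) (bcl_col hα)
            (bcl_row hα) (fun i => |l i|) (r + 2) (by linarith)
          have p2 := bcl_pinch (fun j k => ‖β k j‖ ^ 2) (fun _ _ => by positivity) (bcl_row hβ)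
            (bcl_col hβ) (fun i => |m i|) (r + 2) (by linarith)
          simp only [abs_abs] at p1 p2
          calc _ ≤ ∑ k, ((1 - s) * |∑ i, |l i| * ‖α i k‖ ^ 2| ^ (r + 2)
                  + s * |∑ j, |m j| * ‖β k j‖ ^ 2| ^ (r + 2)) := by
                refine Finset.sum_le_sum fun k _ => ?_
                rw [one_mul]
                exact bcl_conv _ _ s _ (abs_nonneg _) (abs_nonneg _) hs0 hs1 (by linarith)
            _ ≤ (1 - s) * M ^ (r + 2) + s * M ^ (r + 2) := by
                rw [Finset.sum_add_distrib, ← Finset.mul_sum, ← Finset.mul_sum]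
                exact add_le_add (mul_le_mul_of_nonneg_left (p1.trans hl) hs1')
                  (mul_le_mul_of_nonneg_left (p2.trans hm) hs0)
            _ = _ := by ring
  · have t1 : ∑ i, ∑ j, |l i| ^ r * ‖bclM α β κ i j‖ ^ 2 ≤ M ^ r * Y ^ 2 := by
      simp only [← Finset.mul_sum, bclM_row_sq α β hβ κ]
      have := bcl_holder (Finset.univ : Finset (Fin n × Fin n)) (fun q => ‖α q.1 q.2‖ ^ 2)
        (fun q => |l q.1|) (fun q => |κ q.2|) (fun _ => by positivity) (fun _ => abs_nonneg _)
        (fun _ => abs_nonneg _) r M Y hr hM hY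
        (by
          rw [Fintype.sum_prod_type]
          simpa only [← Finset.sum_mul, bcl_row hα, one_mul] using hl)
        (by
          rw [Fintype.sum_prod_type, Finset.sum_comm]
          simpa only [← Finset.sum_mul, bcl_col hα, one_mul] using hk)
      rw [Fintype.sum_prod_type] at this
      refine le_trans (le_of_eq ?_) this
      refine Finset.sum_congr rfl fun i _ => ?_
      rw [Finset.mul_sum]
      refine Finset.sum_congr rfl fun k _ => ?_
      simp only [sq_abs]; ring
    have t2 : ∑ i, ∑ j, |m j| ^ r * ‖bclM α β κ i j‖ ^ 2 ≤ M ^ r * Y ^ 2 := by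
      rw [Finset.sum_comm]
      simp only [← Finset.mul_sum, bclM_col_sq α β hα κ]
      have := bcl_holder (Finset.univ : Finset (Fin n × Fin n)) (fun q => ‖β q.2 q.1‖ ^ 2)
        (fun q => |m q.1|) (fun q => |κ q.2|) (fun _ => by positivity) (fun _ => abs_nonneg _)
        (fun _ => abs_nonneg _) r M Y hr hM hY
        (by
          rw [Fintype.sum_prod_type]
          simpa only [← Finset.sum_mul, bcl_col hβ, one_mul] using hm)
        (by
          rw [Fintype.sum_prod_type, Finset.sum_comm]
          simpa only [← Finset.sum_mul, bcl_row hβ, one_mul] using hk)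
      rw [Fintype.sum_prod_type] at this
      refine le_trans (le_of_eq ?_) this
      refine Finset.sum_congr rfl fun i _ => ?_
      rw [Finset.mul_sum]
      refine Finset.sum_congr rfl fun k _ => ?_
      simp only [sq_abs]; ring
    calc _ ≤ ∑ i, ∑ j, ((1 - s) * (|l i| ^ r * ‖bclM α β κ i j‖ ^ 2)
            + s * (|m j| ^ r * ‖bclM α β κ i j‖ ^ 2)) := by
          refine Finset.sum_le_sum fun i _ => Finset.sum_le_sum fun j _ => ?_
          have h1 := Real.rpow_le_rpow (abs_nonneg _) (habs i j) hr.le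
          have h2 := h1.trans (bcl_conv _ _ s r (abs_nonneg _) (abs_nonneg _) hs0 hs1 hr1)
          have h3 := mul_le_mul_of_nonneg_right h2 (show 0 ≤ ‖bclM α β κ i j‖ ^ 2 by positivity)
          linarith
      _ ≤ (1 - s) * (M ^ r * Y ^ 2) + s * (M ^ r * Y ^ 2) := by
          simp only [Finset.sum_add_distrib]
          simp only [← Finset.mul_sum (a := s), ← Finset.mul_sum (a := 1 - s)]
          exact add_le_add (mul_le_mul_of_nonneg_left t1 hs1') (mul_le_mul_of_nonneg_left t2 hs0)
      _ = _ := by ring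

lemma bcl_deriv2 (q t : ℝ) (hq : 0 < q) :
    HasDerivAt (fun t : ℝ => |t| ^ q * t) ((q + 1) * |t| ^ q) t := by
  rcases eq_or_ne t 0 with rfl | ht
  · rw [hasDerivAt_iff_tendsto_slope_zero]
    have hc : Filter.Tendsto (fun t : ℝ => |t| ^ q) (nhdsWithin 0 {0}ᶜ) (nhds 0) := by
      have h : Continuous (fun t : ℝ => |t| ^ q) :=
        continuous_abs.rpow_const (fun _ => Or.inr hq.le)
      have := h.tendsto 0
      simp only [abs_zero, Real.zero_rpow hq.ne'] at this
      exact this.mono_left nhdsWithin_le_nhds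
    simp only [abs_zero, Real.zero_rpow hq.ne', mul_zero]
    refine hc.congr' ?_
    filter_upwards [self_mem_nhdsWithin] with x hx
    have hx' : x ≠ 0 := hx
    simp
    field_simp
  · have h1 := ((hasDerivAt_abs ht).rpow_const (p := q) (Or.inl (abs_ne_zero.mpr ht))).mul
      (hasDerivAt_id t)
    refine h1.congr_deriv ?_
    have h2 : |t| ^ (q - 1) * |t| = |t| ^ q := by
      rw [Real.rpow_sub_one (abs_ne_zero.mpr ht)]
      field_simp [abs_ne_zero.mpr ht]
    have h3 : (SignType.sign t : ℝ) * t = |t| := by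
      rw [mul_comm]; exact self_mul_sign t
    simp only [id, mul_one]
    calc _ = q * (|t| ^ (q - 1) * ((SignType.sign t : ℝ) * t)) + |t| ^ q := by ring
      _ = _ := by rw [h3, h2]; ring

lemma bcl_taylor (H H1 H2 : ℝ → ℝ) (C : ℝ) (h1 : ∀ s, HasDerivAt H (H1 s) s)
    (h2 : ∀ s, HasDerivAt H1 (H2 s) s) (hC : ∀ s, 0 ≤ s → s ≤ 1 → H2 s ≤ C) :
    H 1 ≤ H 0 + H1 0 + C / 2 := by
  have d1 : ∀ s, HasDerivAt (fun s => H1 s - C * s) (H2 s - C) s := fun s => by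
    exact ((h2 s).sub ((hasDerivAt_id s).const_mul C)).congr_deriv (by simp)
  have a1 : AntitoneOn (fun s => H1 s - C * s) (Set.Icc 0 1) := by
    refine antitoneOn_of_deriv_nonpos (convex_Icc 0 1)
      (fun s _ => (d1 s).continuousAt.continuousWithinAt)
      (fun s _ => (d1 s).differentiableAt.differentiableWithinAt) (fun s hs => ?_)
    rw [interior_Icc] at hs
    rw [(d1 s).deriv]
    linarith [hC s hs.1.le hs.2.le]
  have d2 : ∀ s, HasDerivAt (fun s => H s - H1 0 * s - C / 2 * s ^ 2) (H1 s - H1 0 - C * s) s :=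
    fun s => by
      have := ((h1 s).sub ((hasDerivAt_id s).const_mul (H1 0))).sub
        (((hasDerivAt_id s).pow 2).const_mul (C / 2))
      refine this.congr_deriv ?_
      simp
      ring
  have a2 : AntitoneOn (fun s => H s - H1 0 * s - C / 2 * s ^ 2) (Set.Icc 0 1) := by
    refine antitoneOn_of_deriv_nonpos (convex_Icc 0 1)
      (fun s _ => (d2 s).continuousAt.continuousWithinAt)
      (fun s _ => (d2 s).differentiableAt.differentiableWithinAt) (fun s hs => ?_)
    rw [interior_Icc] at hs
    rw [(d2 s).deriv]
    have := a1 (a := 0) (b := s) ⟨le_rfl, zero_le_one⟩ ⟨hs.1.le, hs.2.le⟩ hs.1.le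
    simp at this
    linarith
  have := a2 (a := 0) (b := 1) ⟨le_rfl, zero_le_one⟩ ⟨zero_le_one, le_rfl⟩ zero_le_one
  simp at this
  linarith

noncomputable def bclU {n : ℕ} {a : Matrix (Fin n) (Fin n) ℂ} (ha : a.IsHermitian) :
    Matrix (Fin n) (Fin n) ℂ := ha.eigenvectorUnitary

lemma bclU_mem {n : ℕ} {a : Matrix (Fin n) (Fin n) ℂ} (ha : a.IsHermitian) :
    bclU ha ∈ Matrix.unitaryGroup (Fin n) ℂ := ha.eigenvectorUnitary.2

lemma bclU_spec {n : ℕ} {a : Matrix (Fin n) (Fin n) ℂ} (ha : a.IsHermitian) :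
    a = bclM (bclU ha) (star (bclU ha)) ha.eigenvalues := by
  have := ha.spectral_theorem
  rw [Unitary.conjStarAlgAut_apply] at this
  exact this

lemma bclU_star {n : ℕ} {a : Matrix (Fin n) (Fin n) ℂ} (ha : a.IsHermitian) :
    star (bclU ha) * bclU ha = 1 := Matrix.mem_unitaryGroup_iff'.mp (bclU_mem ha)

lemma bclU_star' {n : ℕ} {a : Matrix (Fin n) (Fin n) ℂ} (ha : a.IsHermitian) :
    bclU ha * star (bclU ha) = 1 := Matrix.mem_unitaryGroup_iff.mp (bclU_mem ha)

lemma bcl_sandwich {n : ℕ} {a : Matrix (Fin n) (Fin n) ℂ} (ha : a.IsHermitian)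
    (V W : Matrix (Fin n) (Fin n) ℂ) :
    V * a * W = bclM (V * bclU ha) (star (bclU ha) * W) ha.eigenvalues := by
  conv_lhs => rw [bclU_spec ha]
  simp only [bclM, mul_assoc]

lemma bcl_star_mul_mem {n : ℕ} {U V : Matrix (Fin n) (Fin n) ℂ}
    (hU : U ∈ Matrix.unitaryGroup (Fin n) ℂ) (hV : V ∈ Matrix.unitaryGroup (Fin n) ℂ) :
    star U * V ∈ Matrix.unitaryGroup (Fin n) ℂ :=
  mul_mem (Unitary.star_mem hU) hV

/-- the diagonal compression -/
noncomputable def bclD {n : ℕ} (V a : Matrix (Fin n) (Fin n) ℂ) (k : Fin n) : ℝ :=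
  ((star V * a * V) k k).re

lemma bclD_le {n : ℕ} {a : Matrix (Fin n) (Fin n) ℂ} (ha : a.IsHermitian)
    (V : Matrix (Fin n) (Fin n) ℂ) (hV : V ∈ Matrix.unitaryGroup (Fin n) ℂ) (p : ℝ) (hp : 1 ≤ p) :
    ∑ k, |bclD V a k| ^ p ≤ ∑ i, |ha.eigenvalues i| ^ p := by
  have hu := bcl_star_mul_mem (bclU_mem ha) hV
  have h1 : ∀ k, bclD V a k = ∑ i, ha.eigenvalues i * ‖(star (bclU ha) * V) i k‖ ^ 2 := by
    intro k
    have e : star V * bclU ha = star (star (bclU ha) * V) := by simp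
    rw [bclD, bcl_sandwich ha, e, bclM, Matrix.mul_apply, Complex.re_sum]
    refine Finset.sum_congr rfl fun i _ => ?_
    rw [Matrix.mul_diagonal, Matrix.star_apply, mul_right_comm, RCLike.star_def, Complex.conj_mul']
    norm_cast
    ring
  simp only [h1]
  exact bcl_pinch (fun i k => ‖(star (bclU ha) * V) i k‖ ^ 2) (fun _ _ => by positivity)
    (bcl_col hu) (bcl_row hu) _ p hp

lemma bclD_self {n : ℕ} {a : Matrix (Fin n) (Fin n) ℂ} (ha : a.IsHermitian) (k : Fin n) :
    bclD (bclU ha) a k = ha.eigenvalues k := by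
  rw [bclD, bcl_sandwich ha, bclU_star ha, bclM]
  simp

lemma bclD_add {n : ℕ} (V a y : Matrix (Fin n) (Fin n) ℂ) (h : ℝ) (k : Fin n) :
    bclD V (a + (h:ℂ) • y) k = bclD V a k + h * bclD V y k := by
  simp [bclD, mul_add, add_mul]

noncomputable def bclN {n : ℕ} {a : Matrix (Fin n) (Fin n) ℂ} (p : ℝ) (ha : a.IsHermitian) : ℝ :=
  (∑ i, |ha.eigenvalues i| ^ p) ^ (1 / p)

lemma bclN_nonneg {n : ℕ} {a : Matrix (Fin n) (Fin n) ℂ} (p : ℝ) (ha : a.IsHermitian) :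
    0 ≤ bclN p ha :=
  Real.rpow_nonneg (Finset.sum_nonneg fun i _ => Real.rpow_nonneg (abs_nonneg _) _) _

lemma bclN_rpow {n : ℕ} {a : Matrix (Fin n) (Fin n) ℂ} (p : ℝ) (hp : 0 < p) (ha : a.IsHermitian) :
    bclN p ha ^ p = ∑ i, |ha.eigenvalues i| ^ p := by
  rw [bclN, ← Real.rpow_mul (Finset.sum_nonneg fun i _ => Real.rpow_nonneg (abs_nonneg _) _),
    one_div, inv_mul_cancel₀ hp.ne', Real.rpow_one]

lemma bclN_lip {n : ℕ} {a y b : Matrix (Fin n) (Fin n) ℂ} (p : ℝ) (hp : 2 < p)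
    (ha : a.IsHermitian) (hy : y.IsHermitian) (hb : b.IsHermitian) (h : ℝ)
    (hab : b = a + (h:ℂ) • y) : bclN p hb ≤ bclN p ha + |h| * bclN p hy := by
  have hp0 : 0 < p := by linarith
  have e : ∀ k, hb.eigenvalues k = bclD (bclU hb) a k + h * bclD (bclU hb) y k := by
    intro k
    rw [← bclD_self hb k, ← bclD_add, ← hab]
  have m := Real.Lp_add_le Finset.univ (fun k => bclD (bclU hb) a k)
    (fun k => h * bclD (bclU hb) y k) (p := p) (by linarith)
  have nn : ∀ f : Fin n → ℝ, 0 ≤ ∑ k, |f k| ^ p := fun f =>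
    Finset.sum_nonneg fun i _ => Real.rpow_nonneg (abs_nonneg _) _
  have h1 := Real.rpow_le_rpow (nn _) (bclD_le ha (bclU hb) (bclU_mem hb) p (by linarith))
    (show 0 ≤ 1 / p by positivity)
  have h2 := Real.rpow_le_rpow (nn _) (bclD_le hy (bclU hb) (bclU_mem hb) p (by linarith))
    (show 0 ≤ 1 / p by positivity)
  have h3 : (∑ k, |h * bclD (bclU hb) y k| ^ p) ^ (1 / p) =
      |h| * (∑ k, |bclD (bclU hb) y k| ^ p) ^ (1 / p) := by
    simp only [abs_mul, Real.mul_rpow (abs_nonneg h) (abs_nonneg _)]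
    rw [← Finset.mul_sum, Real.mul_rpow (Real.rpow_nonneg (abs_nonneg _) _) (nn _),
      ← Real.rpow_mul (abs_nonneg h), mul_one_div_cancel hp0.ne', Real.rpow_one]
  rw [h3] at m
  unfold bclN
  simp only [e]
  have h4 := mul_le_mul_of_nonneg_left h2 (abs_nonneg h)
  linarith

noncomputable def bclP {n : ℕ} {a : Matrix (Fin n) (Fin n) ℂ} (p : ℝ) (ha : a.IsHermitian)
    (y : Matrix (Fin n) (Fin n) ℂ) : ℝ :=
  ∑ i, p * |ha.eigenvalues i| ^ (p - 2) * ha.eigenvalues i * bclD (bclU ha) y i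

lemma bclN_second {n : ℕ} {a y b : Matrix (Fin n) (Fin n) ℂ} (p : ℝ) (hp : 2 < p)
    (ha : a.IsHermitian) (hy : y.IsHermitian) (hb : b.IsHermitian) (h : ℝ)
    (hab : b = a + (h:ℂ) • y) :
    bclN p hb ^ p ≤ bclN p ha ^ p + h * bclP p ha y +
      h ^ 2 * (p * (p - 1) / 2 * (max (bclN p ha) (bclN p hb) ^ (p - 2) * bclN p hy ^ 2)) := by
  have hp0 : 0 < p := by linarith
  set l := ha.eigenvalues with hl
  set m := hb.eigenvalues with hm
  set κ := hy.eigenvalues with hκ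
  set u := star (bclU ha) * bclU hb with hu
  set α := star (bclU ha) * bclU hy with hα
  set β := star (bclU hy) * bclU hb with hβ
  have huM := bcl_star_mul_mem (bclU_mem ha) (bclU_mem hb)
  have hαM := bcl_star_mul_mem (bclU_mem ha) (bclU_mem hy)
  have hβM := bcl_star_mul_mem (bclU_mem hy) (bclU_mem hb)
  rw [← hu] at huM
  rw [← hα] at hαM
  rw [← hβ] at hβM
  have ident : ∀ i j, u i j * ((m j - l i : ℝ) : ℂ) = h * bclM α β κ i j := by
    intro i j
    have e1 : star (bclU ha) * b * bclU hb = u * Matrix.diagonal (fun k => (m k : ℂ)) := by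
      rw [bcl_sandwich hb, bclU_star hb, bclM, mul_one]
    have e2 : star (bclU ha) * a * bclU hb = Matrix.diagonal (fun k => (l k : ℂ)) * u := by
      rw [bcl_sandwich ha, bclU_star ha, bclM, one_mul]
    have e3 : star (bclU ha) * y * bclU hb = bclM α β κ := bcl_sandwich hy _ _
    have e4 : u * Matrix.diagonal (fun k => (m k : ℂ)) =
        Matrix.diagonal (fun k => (l k : ℂ)) * u + (h:ℂ) • bclM α β κ := by
      rw [← e1, ← e2, ← e3]
      have e8 := congrArg (fun z => star (bclU ha) * z * bclU hb) hab
      simp only [mul_add, add_mul] at e8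
      rw [e8]
      simp
    have e5 := congrFun (congrFun e4 i) j
    rw [Matrix.mul_diagonal, Matrix.add_apply, Matrix.diagonal_mul, Matrix.smul_apply,
      smul_eq_mul] at e5
    push_cast
    linear_combination e5
  have ident2 : ∀ i j, ‖u i j‖ ^ 2 * (m j - l i) ^ 2 = h ^ 2 * ‖bclM α β κ i j‖ ^ 2 := by
    intro i j
    have := congrArg (fun z : ℂ => ‖z‖ ^ 2) (ident i j)
    simp only [norm_mul, Complex.norm_real, Real.norm_eq_abs, mul_pow, sq_abs] at this
    exact this
  have ident1 : ∀ i, ∑ j, ‖u i j‖ ^ 2 * (m j - l i) = h * bclD (bclU ha) y i := by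
    intro i
    have e3 : star (bclU ha) * y * bclU hb = bclM α β κ := bcl_sandwich hy _ _
    have e6 : bclM α β κ * star u = star (bclU ha) * y * bclU ha := by
      rw [← e3, hu, star_mul, star_star]
      calc _ = star (bclU ha) * y * (bclU hb * star (bclU hb)) * bclU ha := by
            simp only [mul_assoc]
        _ = _ := by rw [bclU_star' hb, mul_one]
    rw [bclD, ← e6, Matrix.mul_apply, Complex.re_sum, Finset.mul_sum]
    refine Finset.sum_congr rfl fun j _ => ?_
    have e7 : h * (bclM α β κ i j * star u j i).re =
        ((h * bclM α β κ i j) * star (u i j)).re := by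
      rw [Matrix.star_apply, mul_assoc, Complex.re_ofReal_mul]
    rw [e7, ← ident i j, mul_right_comm, RCLike.star_def, Complex.mul_conj']
    norm_cast
  have D0 : ∀ i j s, HasDerivAt (fun s : ℝ => (1 - s) * l i + s * m j) (m j - l i) s := by
    intro i j s
    have := (((hasDerivAt_id s).const_sub 1).mul_const (l i)).add
      ((hasDerivAt_id s).mul_const (m j))
    refine this.congr_deriv ?_
    ring
  have T := bcl_taylor
    (fun s => ∑ i, ∑ j, ‖u i j‖ ^ 2 * |(1 - s) * l i + s * m j| ^ p)
    (fun s => ∑ i, ∑ j, ‖u i j‖ ^ 2 * (p * (|(1 - s) * l i + s * m j| ^ (p - 2) *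
      ((1 - s) * l i + s * m j)) * (m j - l i)))
    (fun s => ∑ i, ∑ j, ‖u i j‖ ^ 2 * (p * ((p - 1) * |(1 - s) * l i + s * m j| ^ (p - 2) *
      (m j - l i)) * (m j - l i)))
    (h ^ 2 * (p * (p - 1) * (max (bclN p ha) (bclN p hb) ^ (p - 2) * bclN p hy ^ 2)))
    (fun s => by
      refine HasDerivAt.fun_sum fun i _ => HasDerivAt.fun_sum fun j _ => ?_
      have := ((hasDerivAt_abs_rpow ((1 - s) * l i + s * m j) (p := p) (by linarith)).comp s
        (D0 i j s)).const_mul (‖u i j‖ ^ 2)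
      refine this.congr_deriv ?_
      ring)
    (fun s => by
      refine HasDerivAt.fun_sum fun i _ => HasDerivAt.fun_sum fun j _ => ?_
      have := ((((bcl_deriv2 (p - 2) ((1 - s) * l i + s * m j) (by linarith)).comp s
        (D0 i j s)).const_mul p).mul_const (m j - l i)).const_mul (‖u i j‖ ^ 2)
      refine this.congr_deriv ?_
      ring)
    (fun s hs0 hs1 => by
      have hmaxn : 0 ≤ max (bclN p ha) (bclN p hb) := le_max_of_le_left (bclN_nonneg p ha)
      have key := bcl_perS α β hαM hβM κ l m (p - 2) (max (bclN p ha) (bclN p hb)) (bclN p hy) s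
        (by linarith) hmaxn (bclN_nonneg p hy) hs0 hs1
        (by
          rw [sub_add_cancel, ← bclN_rpow p hp0 ha]
          exact Real.rpow_le_rpow (bclN_nonneg p ha) (le_max_left _ _) hp0.le)
        (by
          rw [sub_add_cancel, ← bclN_rpow p hp0 hb]
          exact Real.rpow_le_rpow (bclN_nonneg p hb) (le_max_right _ _) hp0.le)
        (by rw [sub_add_cancel, ← bclN_rpow p hp0 hy])
      have e : ∑ i, ∑ j, ‖u i j‖ ^ 2 * (p * ((p - 1) * |(1 - s) * l i + s * m j| ^ (p - 2) *
          (m j - l i)) * (m j - l i)) = h ^ 2 * (p * (p - 1) *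
          ∑ i, ∑ j, |(1 - s) * l i + s * m j| ^ (p - 2) * ‖bclM α β κ i j‖ ^ 2) := by
        simp only [Finset.mul_sum]
        refine Finset.sum_congr rfl fun i _ => Finset.sum_congr rfl fun j _ => ?_
        linear_combination (p * (p - 1) * |(1 - s) * l i + s * m j| ^ (p - 2)) * ident2 i j
      rw [e]
      have : 0 ≤ p * (p - 1) := mul_nonneg hp0.le (by linarith)
      exact mul_le_mul_of_nonneg_left (mul_le_mul_of_nonneg_left key this) (sq_nonneg h))
  have E1 : ∑ i, ∑ j, ‖u i j‖ ^ 2 * |(1 - (1:ℝ)) * l i + 1 * m j| ^ p = bclN p hb ^ p := by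
    rw [bclN_rpow p hp0 hb, Finset.sum_comm]
    simp only [sub_self, zero_mul, zero_add, one_mul, ← Finset.sum_mul, bcl_col huM]
    rfl
  have E0 : ∑ i, ∑ j, ‖u i j‖ ^ 2 * |(1 - (0:ℝ)) * l i + 0 * m j| ^ p = bclN p ha ^ p := by
    rw [bclN_rpow p hp0 ha]
    simp only [sub_zero, zero_mul, add_zero, one_mul, ← Finset.sum_mul, bcl_row huM]
    rfl
  have EP : ∑ i, ∑ j, ‖u i j‖ ^ 2 * (p * (|(1 - (0:ℝ)) * l i + 0 * m j| ^ (p - 2) *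
      ((1 - (0:ℝ)) * l i + 0 * m j)) * (m j - l i)) = h * bclP p ha y := by
    rw [bclP, Finset.mul_sum]
    refine Finset.sum_congr rfl fun i _ => ?_
    have : h * (p * |ha.eigenvalues i| ^ (p - 2) * ha.eigenvalues i * bclD (bclU ha) y i) =
      p * |l i| ^ (p - 2) * l i * (h * bclD (bclU ha) y i) := by rw [← hl]; ring
    rw [this, ← ident1 i, Finset.mul_sum]
    refine Finset.sum_congr rfl fun j _ => ?_
    simp only [sub_zero, zero_mul, add_zero, one_mul]
    ring
  simp only [E1, E0, EP] at T
  linarith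

lemma bcl_real (p : ℝ) (hp : 2 < p) (N P : ℝ → ℝ) (Y : ℝ) (hY : 0 ≤ Y) (hN : ∀ t, 0 ≤ N t)
    (hlip : ∀ t t0, N t ≤ N t0 + |t - t0| * Y)
    (h2 : ∀ t t0, N t ^ p ≤ N t0 ^ p + (t - t0) * P t0 +
      (t - t0) ^ 2 * (p * (p - 1) / 2 * (max (N t0) (N t) ^ (p - 2) * Y ^ 2))) :
    N 1 ^ 2 + N (-1) ^ 2 ≤ 2 * N 0 ^ 2 + 2 * (p - 1) * Y ^ 2 := by
  have hcont : Continuous N := by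
    have : LipschitzWith (Real.toNNReal Y) N := by
      refine LipschitzWith.of_dist_le_mul fun s t => ?_
      rw [Real.coe_toNNReal _ hY, Real.dist_eq, Real.dist_eq, abs_le]
      have a1 := hlip s t
      have a2 := hlip t s
      rw [abs_sub_comm] at a2
      constructor <;> linarith
    exact this.continuous
  have main : ∀ K, (p - 1) * Y ^ 2 < K → N 1 ^ 2 + N (-1) ^ 2 ≤ 2 * N 0 ^ 2 + 2 * K := by
    intro K hK
    have hK0 : 0 < K := lt_of_le_of_lt (mul_nonneg (by linarith) (sq_nonneg Y)) hK
    have loc : ∀ t0, ∃ c, ∀ᶠ t in nhds t0, t ≠ t0 →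
        N t ^ 2 < N t0 ^ 2 + c * (t - t0) + K * (t - t0) ^ 2 := by
      intro t0
      rcases (hN t0).eq_or_lt with h0 | h0
      · refine ⟨0, Filter.Eventually.of_forall fun t ht => ?_⟩
        have a1 := hlip t t0
        rw [← h0, zero_add] at a1
        have a2 : N t ^ 2 ≤ (|t - t0| * Y) ^ 2 := pow_le_pow_left₀ (hN t) a1 2
        rw [mul_pow, sq_abs] at a2
        have a3 : 0 < (t - t0) ^ 2 := by
          have := sub_ne_zero.mpr ht
          positivity
        have a4 : Y ^ 2 < K := by nlinarith [sq_nonneg Y]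
        rw [← h0]
        nlinarith
      · refine ⟨2 / p * N t0 ^ (2 - p) * P t0, ?_⟩
        have hcts : Continuous (fun t => (p - 1) * Y ^ 2 * (max (N t0) (N t) / N t0) ^ (p - 2)) := by
          refine continuous_const.mul (Continuous.rpow_const ?_ (fun _ => Or.inr (by linarith)))
          exact (continuous_const.max hcont).div_const _
        have ev : ∀ᶠ t in nhds t0, (p - 1) * Y ^ 2 * (max (N t0) (N t) / N t0) ^ (p - 2) < K := by
          refine hcts.continuousAt.eventually_lt continuousAt_const ?_
          simpa [max_self, div_self h0.ne'] using hK
        filter_upwards [ev] with t ht hne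
        have a3 : 0 < (t - t0) ^ 2 := by
          have := sub_ne_zero.mpr hne
          positivity
        have hmx : 0 ≤ max (N t0) (N t) := le_max_of_le_left h0.le
        have b := one_add_mul_self_le_rpow_one_add (s := (N t / N t0) ^ 2 - 1)
          (by nlinarith [sq_nonneg (N t / N t0)]) (p := p / 2) (by linarith)
        have b1 : (1 + ((N t / N t0) ^ 2 - 1)) ^ (p / 2) = N t ^ p / N t0 ^ p := by
          rw [add_sub_cancel, ← Real.rpow_two, ← Real.rpow_mul (div_nonneg (hN t) h0.le),
            Real.div_rpow (hN t) h0.le]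
          congr 2 <;> ring
        rw [b1] at b
        have hp0 : 0 < p := by linarith
        have c1 : N t0 ^ (2 - p) * N t0 ^ p = N t0 ^ 2 := by
          rw [← Real.rpow_add h0, sub_add_cancel, Real.rpow_two]
        have hpos : 0 < N t0 ^ p := Real.rpow_pos_of_pos h0 p
        have hpos2 : 0 < N t0 ^ (2 - p) := Real.rpow_pos_of_pos h0 _
        have c2 : N t ^ 2 ≤ N t0 ^ 2 + 2 / p * N t0 ^ (2 - p) * (N t ^ p - N t0 ^ p) := by
          have d1 : (N t / N t0) ^ 2 ≤ 1 + 2 / p * (N t ^ p / N t0 ^ p - 1) := by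
            have d0 := mul_le_mul_of_nonneg_left b (show 0 ≤ 2 / p by positivity)
            have : 2 / p * (1 + p / 2 * ((N t / N t0) ^ 2 - 1)) =
              2 / p + ((N t / N t0) ^ 2 - 1) := by field_simp
            rw [this] at d0
            linarith
          have d2 := mul_le_mul_of_nonneg_right d1 (sq_nonneg (N t0))
          rw [div_pow, div_mul_cancel₀ _ (by positivity)] at d2
          refine d2.trans (le_of_eq ?_)
          rw [← c1]
          field_simp
        have c3 : N t0 ^ (2 - p) * max (N t0) (N t) ^ (p - 2) =
            (max (N t0) (N t) / N t0) ^ (p - 2) := by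
          rw [Real.div_rpow hmx h0.le, show 2 - p = -(p - 2) by ring, Real.rpow_neg h0.le]
          field_simp
        have c4 := mul_le_mul_of_nonneg_left (h2 t t0)
          (show 0 ≤ 2 / p * N t0 ^ (2 - p) by positivity)
        have c5 : 2 / p * N t0 ^ (2 - p) * (N t0 ^ p + (t - t0) * P t0 +
            (t - t0) ^ 2 * (p * (p - 1) / 2 * (max (N t0) (N t) ^ (p - 2) * Y ^ 2))) =
            2 / p * N t0 ^ (2 - p) * N t0 ^ p + 2 / p * N t0 ^ (2 - p) * P t0 * (t - t0) +
            ((p - 1) * Y ^ 2 * (max (N t0) (N t) / N t0) ^ (p - 2)) * (t - t0) ^ 2 := by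
          rw [← c3]
          field_simp
        rw [c5] at c4
        have c6 := mul_lt_mul_of_pos_right ht a3
        linarith
    by_contra hcon
    push Not at hcon
    set A := (N 1 ^ 2 - N (-1) ^ 2) / 2 with hA
    set B := (N 1 ^ 2 + N (-1) ^ 2) / 2 - K with hB
    have hψ : Continuous (fun t => N t ^ 2 - K * t ^ 2 - A * t - B) := by fun_prop
    obtain ⟨t0, ht0, hmin⟩ := (isCompact_Icc (a := (-1:ℝ)) (b := 1)).exists_isMinOn
      ⟨0, by simp⟩ hψ.continuousOn
    have v0 := hmin (show (0:ℝ) ∈ Set.Icc (-1) 1 by simp)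
    simp only [Set.mem_ofPred_eq] at v0
    have hneg : N t0 ^ 2 - K * t0 ^ 2 - A * t0 - B < 0 := by
      refine lt_of_le_of_lt v0 ?_
      simp [hB]; linarith
    have hint : t0 ∈ Set.Ioo (-1:ℝ) 1 := by
      refine ⟨lt_of_le_of_ne ht0.1 ?_, lt_of_le_of_ne ht0.2 ?_⟩
      · intro h
        rw [← h] at hneg
        simp only [hA, hB] at hneg
        linarith
      · intro h
        rw [h] at hneg
        simp only [hA, hB] at hneg
        linarith
    obtain ⟨c, hc⟩ := loc t0
    have hnb : ∀ᶠ t in nhds t0, t ∈ Set.Ioo (-1:ℝ) 1 := Ioo_mem_nhds hint.1 hint.2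
    obtain ⟨ε, hε, hball⟩ := Metric.eventually_nhds_iff.mp (hc.and hnb)
    have test : ∀ d : ℝ, |d| < ε → d ≠ 0 → 0 < (c - 2 * K * t0 - A) * d := by
      intro d hd hd0
      have hb := hball (y := t0 + d) (by simpa [Real.dist_eq] using hd)
      have q1 := hb.1 (by simpa using hd0)
      have q2 := hmin (Set.Ioo_subset_Icc_self hb.2)
      simp only [Set.mem_ofPred_eq] at q2
      rw [add_sub_cancel_left] at q1
      nlinarith
    have t1 := test (ε / 2) (by rw [abs_of_pos (by positivity)]; linarith) (by positivity)
    have t2 := test (-(ε / 2)) (by rw [abs_neg, abs_of_pos (by positivity)]; linarith)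
      (by have : 0 < ε / 2 := by positivity
          exact (neg_neg_of_pos this).ne)
    linarith
  refine le_of_forall_pos_le_add fun ε hε => ?_
  have := main ((p - 1) * Y ^ 2 + ε / 2) (by linarith)
  linarith

/-- Reversed **Ball–Carlen–Lieb convexity inequality** for Hermitian matrices, `2 < p < ∞`:
`‖x+y‖_p² + ‖x−y‖_p² ≤ 2‖x‖_p² + 2(p−1)‖y‖_p²`. -/
theorem bcl_matrix_gt_two {n : ℕ} (hn : 1 ≤ n) (p : ℝ) (hp : 2 < p)
    (x y : Matrix (Fin n) (Fin n) ℂ) (hx : x.IsHermitian) (hy : y.IsHermitian) :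
    hermitianSchattenNorm p (x + y) ^ 2 + hermitianSchattenNorm p (x - y) ^ 2
    ≤ 2 * hermitianSchattenNorm p x ^ 2 + 2 * (p - 1) * hermitianSchattenNorm p y ^ 2 := by
  have hS : ∀ {a : Matrix (Fin n) (Fin n) ℂ} (ha : a.IsHermitian),
      hermitianSchattenNorm p a = bclN p ha := fun ha => by
    rw [hermitianSchattenNorm, dif_pos ha]; rfl
  have hH : ∀ t : ℝ, (x + (t:ℂ) • y).IsHermitian := fun t => by
    refine hx.add ?_
    rw [Matrix.IsHermitian, Matrix.conjTranspose_smul, hy.eq]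
    simp
  have hstep : ∀ t t0 : ℝ, x + (t:ℂ) • y = (x + (t0:ℂ) • y) + ((t - t0 : ℝ) : ℂ) • y := by
    intro t t0
    push_cast
    rw [sub_smul]
    abel
  have main := bcl_real p hp (fun t => bclN p (hH t)) (fun t => bclP p (hH t) y) (bclN p hy)
    (bclN_nonneg p hy) (fun t => bclN_nonneg p _)
    (fun t t0 => bclN_lip p hp (hH t0) hy (hH t) (t - t0) (hstep t t0))
    (fun t t0 => bclN_second p hp (hH t0) hy (hH t) (t - t0) (hstep t t0))
  simp only [← hS] at main
  simpa [sub_eq_add_neg] using main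
end

section
/- Let n ≥ 1, let 1 < p ≤ 2, let x be a Hermitian n×n complex matrix, and let u be a Hermitian unitary n×n complex matrix. Then ‖x‖_p² ≥ ‖(x + u x u)/2‖_p² + (p−1)·‖(x − u x u)/2‖_p², where for a Hermitian matrix a, ‖a‖_p := (∑_{i=1}^n |λ_i(a)|^p)^{1/p} and λ_i(a) are the eigenvalues of a counted with multiplicity. -/
open scoped BigOperators

lemma bern_neg {p z : ℝ} (hp1 : 1 < p) (hp2 : p ≤ 2) (hz : 0 < z) :
    1 + (p - 2) * (z - 1) ≤ z ^ (p - 2) := by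
  have h1 : z ^ (2 - p) ≤ 1 + (2 - p) * (z - 1) := by
    have := rpow_one_add_le_one_add_mul_self (s := z - 1) (by linarith) (p := 2 - p)
      (by linarith) (by linarith)
    simpa using this
  have h2 : 0 < z ^ (2 - p) := Real.rpow_pos_of_pos hz _
  have h3 : z ^ (p - 2) = (z ^ (2 - p))⁻¹ := by
    rw [← Real.rpow_neg hz.le]; congr 1; ring
  rw [h3]
  have h4 : (z ^ (2 - p)) * (1 + (p - 2) * (z - 1)) ≤ 1 := by
    rcases le_total (1 + (p - 2) * (z - 1)) 0 with h | h
    · nlinarith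
    · nlinarith [sq_nonneg ((2 - p) * (z - 1))]
  rw [← one_div, le_div_iff₀ h2]
  linarith

lemma scalar_pos {p α β : ℝ} (hp1 : 1 < p) (hp2 : p ≤ 2) (hα : 0 ≤ α) (hβ : 0 ≤ β)
    (hm : 0 < (2 * β + α) / 3) :
    p * (p - 1) / 2 * (α - β) ^ 2 * ((2 * β + α) / 3) ^ (p - 2) ≤
      α ^ p - β ^ p - p * β ^ (p - 1) * (α - β) := by
  set m := (2 * β + α) / 3 with hmdef
  set M := m ^ (p - 2) with hM
  have hMpos : 0 < M := Real.rpow_pos_of_pos hm _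
  let D : ℝ → ℝ := fun t => t ^ p - p * (p - 1) * M * ((3 - p) * t ^ 2 / 2 - (2 - p) * t ^ 3 / (6 * m))
  let D1 : ℝ → ℝ := fun t => p * t ^ (p - 1) -
    p * (p - 1) * M * ((3 - p) * t - (2 - p) * t ^ 2 / (2 * m))
  have hD : ∀ t, HasDerivAt D (D1 t) t := by
    intro t
    have h1 := Real.hasDerivAt_rpow_const (x := t) (p := p) (Or.inr hp1.le)
    have h2 := (((((hasDerivAt_id t).pow 2).const_mul (3 - p)).div_const 2).sub
      ((((hasDerivAt_id t).pow 3).const_mul (2 - p)).div_const (6 * m))).const_mul (p * (p - 1) * M)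
    refine (h1.sub h2).congr_deriv ?_
    simp only [D1, id]
    field_simp
    ring
  have hD1 : ∀ t, 0 < t → HasDerivAt D1 (p * ((p - 1) * t ^ (p - 2)) -
    p * (p - 1) * M * ((3 - p) - (2 - p) * t / m)) t := by
    intro t ht
    have h1 := (Real.hasDerivAt_rpow_const (x := t) (p := p - 1) (Or.inl ht.ne')).const_mul p
    have h2 := ((((hasDerivAt_id t)).const_mul (3 - p)).sub
      ((((hasDerivAt_id t).pow 2).const_mul (2 - p)).div_const (2 * m))).const_mul (p * (p - 1) * M)
    refine (h1.sub h2).congr_deriv ?_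
    rw [show p - 1 - 1 = p - 2 by ring]
    simp only [id]
    field_simp
    ring
  have hcont : Continuous D1 := by
    have : Continuous fun t : ℝ => t ^ (p - 1) :=
      continuous_id.rpow_const (fun _ => Or.inr (by linarith))
    simp only [D1]
    fun_prop
  have hmono : MonotoneOn D1 (Set.Ici 0) := by
    refine monotoneOn_of_hasDerivWithinAt_nonneg (convex_Ici 0) hcont.continuousOn
      (fun t ht => (hD1 t (by simpa using ht)).hasDerivWithinAt) ?_
    intro t ht
    have ht : 0 < t := by simpa using ht
    have h := bern_neg hp1 hp2 (div_pos ht hm)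
    rw [Real.div_rpow ht.le hm.le, le_div_iff₀ hMpos] at h
    have hk : 0 < p * (p - 1) := mul_pos (by linarith) (by linarith)
    have h5 := mul_le_mul_of_nonneg_left h hk.le
    have e : (1 + (p - 2) * (t / m - 1)) = ((3 - p) - (2 - p) * t / m) := by ring
    rw [e] at h5
    linarith
  have key : D β + D1 β * (α - β) ≤ D α := by
    have hDc : Continuous D := continuous_iff_continuousAt.2 fun t => (hD t).continuousAt
    rcases lt_trichotomy α β with h | h | h
    · obtain ⟨c, hc, hc'⟩ := exists_hasDerivAt_eq_slope D D1 h hDc.continuousOn (fun t _ => hD t)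
      have := hmono (show c ∈ Set.Ici 0 from hα.trans hc.1.le) (show β ∈ Set.Ici 0 from hβ) hc.2.le
      rw [hc', div_le_iff₀ (by linarith)] at this
      linarith
    · simp [h]
    · obtain ⟨c, hc, hc'⟩ := exists_hasDerivAt_eq_slope D D1 h hDc.continuousOn (fun t _ => hD t)
      have := hmono (show β ∈ Set.Ici 0 from hβ) (show c ∈ Set.Ici 0 from hβ.trans hc.1.le) hc.1.le
      rw [hc', le_div_iff₀ (by linarith)] at this
      linarith
  have e : α ^ p - β ^ p - p * β ^ (p - 1) * (α - β) - p * (p - 1) / 2 * (α - β) ^ 2 * M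
     = D α - (D β + D1 β * (α - β)) := by
    simp only [D, D1]
    have h3 : α = 3 * m - 2 * β := by rw [hmdef]; ring
    rw [h3]
    field_simp
    ring
  linarith

lemma scalar_all {p α β : ℝ} (hp1 : 1 < p) (hp2 : p ≤ 2)
    (hm : 0 < (2 * |β| + |α|) / 3) :
    p * (p - 1) / 2 * (α - β) ^ 2 * ((2 * |β| + |α|) / 3) ^ (p - 2) ≤
      |α| ^ p - |β| ^ p - p * (|β| ^ (p - 2) * β) * (α - β) := by
  wlog hβ : 0 ≤ β generalizing α β
  · have := this (α := -α) (β := -β) (by simpa using hm) (by linarith)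
    simp only [abs_neg] at this
    linarith
  have hpw : β ^ (p - 2) * β = β ^ (p - 1) := by
    rcases hβ.eq_or_lt with h | h
    · rw [← h, Real.zero_rpow (by linarith : p - 1 ≠ 0)]; simp
    · rw [← Real.rpow_add_one h.ne']; congr 1; ring
  have h1 := scalar_pos hp1 hp2 (abs_nonneg α) (abs_nonneg β) hm
  rw [abs_of_nonneg hβ] at h1 hm ⊢
  rw [hpw]
  rcases le_total 0 α with hα | hα
  · rw [abs_of_nonneg hα] at h1 ⊢; exact h1
  rw [abs_of_nonpos hα] at h1 hm ⊢
  set m := (2 * β + -α) / 3 with hmd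
  have h2 : (p - 1) * (β * m ^ (p - 2)) ≤ β ^ (p - 1) := by
    rcases hβ.eq_or_lt with h | h
    · rw [← h, Real.zero_rpow (by linarith : p - 1 ≠ 0)]; simp
    have h3 : m ^ (p - 2) ≤ (2 / 3 * β) ^ (p - 2) :=
      Real.rpow_le_rpow_of_nonpos (by positivity) (by rw [hmd]; linarith) (by linarith)
    rw [Real.mul_rpow (by norm_num) h.le] at h3
    have h4 : (p - 1) * (2 / 3 : ℝ) ^ (p - 2) ≤ 1 := by
      have : (2 / 3 : ℝ) ^ (p - 2) = (1 + 1 / 2) ^ (2 - p) := by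
        rw [show (1 + 1 / 2 : ℝ) = (2 / 3)⁻¹ by norm_num, Real.inv_rpow (by norm_num),
          ← Real.rpow_neg (by norm_num)]; congr 1; ring
      rw [this]
      have := rpow_one_add_le_one_add_mul_self (s := 1 / 2) (by linarith) (p := 2 - p)
        (by linarith) (by linarith)
      nlinarith
    have hb : 0 < β ^ (p - 1) := Real.rpow_pos_of_pos h _
    calc (p - 1) * (β * m ^ (p - 2)) ≤ (p - 1) * (β * ((2 / 3 : ℝ) ^ (p - 2) * β ^ (p - 2))) := by
          gcongr
      _ = ((p - 1) * (2 / 3 : ℝ) ^ (p - 2)) * β ^ (p - 1) := by rw [← hpw]; ring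
      _ ≤ 1 * β ^ (p - 1) := by gcongr
      _ = _ := one_mul _
  have h6 := mul_le_mul_of_nonneg_left h2 (show 0 ≤ 2 * p * (-α) by nlinarith)
  linarith

lemma scalar_eps {p α β ε : ℝ} (hp1 : 1 < p) (hp2 : p ≤ 2) (hε : 0 < ε) :
    p * (p - 1) / 2 * (α - β) ^ 2 * ((2 * |β| + |α|) / 3 + ε) ^ (p - 2) ≤
      |α| ^ p - |β| ^ p - p * (|β| ^ (p - 2) * β) * (α - β) := by
  rcases (show 0 ≤ (2 * |β| + |α|) / 3 by positivity).eq_or_lt with h | h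
  · have hb : β = 0 := abs_eq_zero.1 (by linarith [abs_nonneg α, abs_nonneg β])
    have ha : α = 0 := abs_eq_zero.1 (by linarith [abs_nonneg α, abs_nonneg β])
    simp [ha, hb]
  · refine le_trans ?_ (scalar_all hp1 hp2 h)
    have h1 : ((2 * |β| + |α|) / 3 + ε) ^ (p - 2) ≤ ((2 * |β| + |α|) / 3) ^ (p - 2) :=
      Real.rpow_le_rpow_of_nonpos h (by linarith) (by linarith)
    have : 0 ≤ p * (p - 1) / 2 * (α - β) ^ 2 :=
      mul_nonneg (by nlinarith) (sq_nonneg _)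
    gcongr

lemma chord {r z : ℝ} (hr0 : 0 ≤ r) (hz1 : 1 ≤ z) (hz3 : z ≤ 3) :
    1 + r / 2 * (z - 1) ≤ z ^ r := by
  have h0 : (z - 1) / 2 ≤ Real.log z := by
    have hc := (strictConcaveOn_log_Ioi.concaveOn).2
      (show (1:ℝ) ∈ Set.Ioi 0 by simp) (show (3:ℝ) ∈ Set.Ioi 0 by simp)
      (show 0 ≤ (3 - z) / 2 by linarith) (show 0 ≤ (z - 1) / 2 by linarith) (by ring)
    simp only [smul_eq_mul, Real.log_one, mul_zero, zero_add, mul_one] at hc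
    rw [show (3 - z) / 2 + (z - 1) / 2 * 3 = z by ring] at hc
    have h3 : 1 ≤ Real.log 3 := by
      rw [Real.le_log_iff_exp_le (by norm_num)]
      linarith [Real.exp_one_lt_d9]
    nlinarith
  rw [Real.rpow_def_of_pos (by linarith)]
  have := Real.add_one_le_exp (Real.log z * r)
  nlinarith

lemma scalar_final {p P Q : ℝ} (hp1 : 1 < p) (hp2 : p ≤ 2) (hQ : 0 ≤ Q) (hPQ : Q ≤ P) :
    (P ^ p - Q ^ p) * ((2 * Q + P) / 3) ^ (2 - p) ≤ p / 2 * (P ^ 2 - Q ^ 2) := by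
  let φ : ℝ → ℝ := fun t => p / 2 * (t ^ 2 - Q ^ 2) - (t ^ p - Q ^ p) * ((2 * Q + t) / 3) ^ (2 - p)
  have hcont : Continuous φ := by
    have h1 : Continuous fun t : ℝ => t ^ p :=
      continuous_id.rpow_const (fun _ => Or.inr (by linarith))
    have h2 : Continuous fun t : ℝ => ((2 * Q + t) / 3) ^ (2 - p) :=
      Continuous.rpow_const (by fun_prop) (fun _ => Or.inr (by linarith))
    simp only [φ]
    fun_prop
  have hmono : MonotoneOn φ (Set.Ici Q) := by
    refine monotoneOn_of_hasDerivWithinAt_nonneg (f' := fun t => p * t -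
      (p * t ^ (p - 1) * ((2 * Q + t) / 3) ^ (2 - p) +
        (t ^ p - Q ^ p) * ((2 - p) / 3 * ((2 * Q + t) / 3) ^ (1 - p))))
      (convex_Ici Q) hcont.continuousOn ?_ ?_
    · intro t ht
      have ht : Q < t := by simpa using ht
      have h1 := (((hasDerivAt_id t).pow 2).sub_const (Q ^ 2)).const_mul (p / 2)
      have h2 := (Real.hasDerivAt_rpow_const (x := t) (p := p) (Or.inr hp1.le)).sub_const (Q ^ p)
      have h3 := (((hasDerivAt_id t).const_add (2 * Q)).div_const 3).rpow_const (p := 2 - p)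
        (Or.inl (by simp only [id]; linarith))
      refine ((h1.sub (h2.mul h3)).congr_deriv ?_).hasDerivWithinAt
      simp only [id]
      rw [show 2 - p - 1 = 1 - p by ring]
      ring
    · intro t ht
      have ht : Q < t := by simpa using ht
      have ht0 : 0 < t := by linarith
      set N := (2 * Q + t) / 3 with hN
      have hN0 : 0 < N := by rw [hN]; linarith
      have hb : t ^ p - Q ^ p ≤ p * t ^ (p - 1) * (t - Q) := by
        have := one_add_mul_self_le_rpow_one_add (s := Q / t - 1)
          (by linarith [div_nonneg hQ ht0.le]) hp1.le
        rw [show 1 + (Q / t - 1) = Q / t by ring, Real.div_rpow hQ ht0.le,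
          le_div_iff₀ (Real.rpow_pos_of_pos ht0 _)] at this
        have e : t ^ p = t ^ (p - 1) * t := by
          rw [← Real.rpow_add_one ht0.ne']; congr 1; ring
        have e2 : (1 + p * (Q / t - 1)) * t ^ p = t ^ p - p * t ^ (p - 1) * (t - Q) := by
          rw [e]; field_simp; ring
        linarith
      have hc := chord (r := 2 - p) (z := t / N) (by linarith)
        (by rw [le_div_iff₀ hN0]; linarith) (by rw [div_le_iff₀ hN0]; linarith)
      rw [Real.div_rpow ht0.le hN0.le, le_div_iff₀ (Real.rpow_pos_of_pos hN0 _)] at hc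
      have e1 : N ^ (2 - p) = N ^ (1 - p) * N := by
        rw [← Real.rpow_add_one hN0.ne']; congr 1; ring
      have e2 : t = t ^ (p - 1) * t ^ (2 - p) := by
        rw [← Real.rpow_add ht0]; norm_num
      have hN1 : 0 < N ^ (1 - p) := Real.rpow_pos_of_pos hN0 _
      have ht1 : 0 < t ^ (p - 1) := Real.rpow_pos_of_pos ht0 _
      have hc2 : N ^ (2 - p) + (2 - p) / 3 * (t - Q) * N ^ (1 - p) ≤ t ^ (2 - p) := by
        refine le_trans (le_of_eq ?_) hc
        rw [e1]
        have : t - Q = 3 / 2 * (t - N) := by rw [hN]; ring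
        rw [this]
        field_simp
      have h7 : (t ^ p - Q ^ p) * ((2 - p) / 3 * N ^ (1 - p)) ≤
          (p * t ^ (p - 1) * (t - Q)) * ((2 - p) / 3 * N ^ (1 - p)) :=
        mul_le_mul_of_nonneg_right hb (mul_nonneg (by linarith) hN1.le)
      have h8 := mul_le_mul_of_nonneg_left hc2 (show 0 ≤ p * t ^ (p - 1) by positivity)
      have e3 : p * t = p * t ^ (p - 1) * t ^ (2 - p) := by
        conv_lhs => rw [e2]
        ring
      rw [e3]
      linarith
  have := hmono (Set.mem_Ici.2 le_rfl) (Set.mem_Ici.2 hPQ) hPQ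
  simp only [φ, sub_self, mul_zero, zero_mul] at this
  linarith

open Matrix in
lemma sum_vecMul_norm_sq {n : ℕ} (R : Matrix (Fin n) (Fin n) ℂ) (hR : R * Rᴴ = 1) (v : Fin n → ℂ) :
    ∑ j, ‖∑ l, v l * R l j‖ ^ 2 = ∑ l, ‖v l‖ ^ 2 := by
  have key : ∀ w : Fin n → ℂ, ((∑ j, ‖w j‖ ^ 2 : ℝ) : ℂ) = w ⬝ᵥ star w := by
    intro w
    simp only [dotProduct, Pi.star_apply, Complex.ofReal_sum, Complex.ofReal_pow]
    refine Finset.sum_congr rfl fun j _ => ?_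
    rw [Complex.star_def, Complex.mul_conj']
  have h : (v ᵥ* R) ⬝ᵥ star (v ᵥ* R) = v ⬝ᵥ star v := by
    rw [star_vecMul, dotProduct_mulVec, vecMul_vecMul, hR, vecMul_one]
  rw [← key, ← key] at h
  exact_mod_cast h

lemma sum_row {n : ℕ} (P R : Matrix (Fin n) (Fin n) ℂ) (hR : R * R.conjTranspose = 1)
    (ζ : Fin n → ℝ) (i : Fin n) :
    ∑ j, ‖∑ l, P i l * ζ l * R l j‖ ^ 2 = ∑ l, ζ l ^ 2 * ‖P i l‖ ^ 2 := by
  rw [sum_vecMul_norm_sq R hR]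
  refine Finset.sum_congr rfl fun l _ => ?_
  rw [norm_mul, Complex.norm_real, mul_pow, Real.norm_eq_abs, sq_abs, mul_comm]

lemma sum_col {n : ℕ} (P R : Matrix (Fin n) (Fin n) ℂ) (hP : P.conjTranspose * P = 1)
    (ζ : Fin n → ℝ) (j : Fin n) :
    ∑ i, ‖∑ l, P i l * ζ l * R l j‖ ^ 2 = ∑ l, ζ l ^ 2 * ‖R l j‖ ^ 2 := by
  have hPt : P.transpose * P.transpose.conjTranspose = 1 := by
    have := congrArg Matrix.transpose hP
    rw [Matrix.transpose_mul, Matrix.transpose_one] at this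
    exact this
  refine Eq.trans ?_ (sum_row R.transpose P.transpose hPt ζ j)
  refine Finset.sum_congr rfl fun i _ => ?_
  congr 2
  refine Finset.sum_congr rfl fun l _ => ?_
  simp only [Matrix.transpose_apply]
  ring

lemma row_one {n : ℕ} (P : Matrix (Fin n) (Fin n) ℂ) (hP : P * P.conjTranspose = 1) (i : Fin n) :
    ∑ l, ‖P i l‖ ^ 2 = 1 := by
  have := sum_vecMul_norm_sq P hP (Pi.single i 1)
  simpa [Pi.single_apply, apply_ite] using this

lemma col_one {n : ℕ} (P : Matrix (Fin n) (Fin n) ℂ) (hP : P.conjTranspose * P = 1) (l : Fin n) :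
    ∑ i, ‖P i l‖ ^ 2 = 1 := by
  have := row_one P.conjTranspose (by simpa using hP) l
  simpa using this

lemma sum_frob {n : ℕ} (P R : Matrix (Fin n) (Fin n) ℂ) (hP : P.conjTranspose * P = 1)
    (hR : R * R.conjTranspose = 1) (ζ : Fin n → ℝ) :
    ∑ i, ∑ j, ‖∑ l, P i l * ζ l * R l j‖ ^ 2 = ∑ l, ζ l ^ 2 := by
  simp_rw [sum_row P R hR]
  rw [Finset.sum_comm]
  refine Finset.sum_congr rfl fun l _ => ?_
  rw [← Finset.mul_sum, col_one P hP, mul_one]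

lemma resolvent_ineq {n : ℕ} (P R : Matrix (Fin n) (Fin n) ℂ)
    (hP : P.conjTranspose * P = 1) (hR : R * R.conjTranspose = 1)
    (α β η : Fin n → ℝ) {s : ℝ} (hs : 0 < s) (hα : ∀ i, 0 ≤ α i) (hβ : ∀ i, 0 ≤ β i) :
    ∑ l, η l ^ 2 / ((2 * (∑ j, β j * ‖R l j‖ ^ 2) + ∑ i, α i * ‖P i l‖ ^ 2) / 3 + s) ≤
    ∑ i, ∑ j, ‖∑ l, P i l * η l * R l j‖ ^ 2 / ((2 * β j + α i) / 3 + s) := by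
  set X : Fin n → ℝ := fun l => (2 * (∑ j, β j * ‖R l j‖ ^ 2) + ∑ i, α i * ‖P i l‖ ^ 2) / 3 + s
    with hX
  have hXpos : ∀ l, 0 < X l := by
    intro l
    have h1 : 0 ≤ ∑ j, β j * ‖R l j‖ ^ 2 :=
      Finset.sum_nonneg fun j _ => mul_nonneg (hβ j) (sq_nonneg _)
    have h2 : 0 ≤ ∑ i, α i * ‖P i l‖ ^ 2 :=
      Finset.sum_nonneg fun j _ => mul_nonneg (hα j) (sq_nonneg _)
    simp only [hX]; positivity
  set ζ : Fin n → ℝ := fun l => η l / X l with hζ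
  have e1 := sum_frob P R hP hR η
  have e2 := sum_frob P R hP hR ζ
  have e3 := sum_frob P R hP hR (fun l => η l + ζ l)
  have e4 : ∑ i, ∑ j, ((2 * β j + α i) / 3 + s) * ‖∑ l, P i l * ζ l * R l j‖ ^ 2
      = ∑ l, X l * ζ l ^ 2 := by
    have a1 : ∑ i, ∑ j, α i * ‖∑ l, P i l * ζ l * R l j‖ ^ 2
        = ∑ l, (∑ i, α i * ‖P i l‖ ^ 2) * ζ l ^ 2 := by
      simp_rw [← Finset.mul_sum, sum_row P R hR, Finset.mul_sum, Finset.sum_mul]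
      rw [Finset.sum_comm]
      refine Finset.sum_congr rfl fun l _ => Finset.sum_congr rfl fun i _ => by ring
    have a2 : ∑ i, ∑ j, β j * ‖∑ l, P i l * ζ l * R l j‖ ^ 2
        = ∑ l, (∑ j, β j * ‖R l j‖ ^ 2) * ζ l ^ 2 := by
      rw [Finset.sum_comm]
      simp_rw [← Finset.mul_sum, sum_col P R hP, Finset.mul_sum, Finset.sum_mul]
      rw [Finset.sum_comm]
      refine Finset.sum_congr rfl fun l _ => Finset.sum_congr rfl fun i _ => by ring
    calc _ = 2 / 3 * ∑ i, ∑ j, β j * ‖∑ l, P i l * ζ l * R l j‖ ^ 2 +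
          1 / 3 * ∑ i, ∑ j, α i * ‖∑ l, P i l * ζ l * R l j‖ ^ 2 +
          s * ∑ i, ∑ j, ‖∑ l, P i l * ζ l * R l j‖ ^ 2 := by
          simp_rw [Finset.mul_sum, ← Finset.sum_add_distrib]
          refine Finset.sum_congr rfl fun l _ => Finset.sum_congr rfl fun i _ => by ring
      _ = _ := by
          rw [a1, a2, e2]
          simp_rw [Finset.mul_sum, ← Finset.sum_add_distrib]
          refine Finset.sum_congr rfl fun l _ => by simp only [hX]; ring
  have pt : ∀ i j, ‖∑ l, P i l * ((η l + ζ l : ℝ) : ℂ) * R l j‖ ^ 2 - ‖∑ l, P i l * η l * R l j‖ ^ 2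
      - ‖∑ l, P i l * ζ l * R l j‖ ^ 2
      - ((2 * β j + α i) / 3 + s) * ‖∑ l, P i l * ζ l * R l j‖ ^ 2 ≤
      ‖∑ l, P i l * η l * R l j‖ ^ 2 / ((2 * β j + α i) / 3 + s) := by
    intro i j
    have hy : 0 < (2 * β j + α i) / 3 + s := by
      have := hα i; have := hβ j; positivity
    have hadd : ∑ l, P i l * ((η l + ζ l : ℝ) : ℂ) * R l j =
        ∑ l, P i l * η l * R l j + ∑ l, P i l * ζ l * R l j := by
      rw [← Finset.sum_add_distrib]
      refine Finset.sum_congr rfl fun l _ => by push_cast; ring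
    rw [hadd]
    generalize (∑ l, P i l * η l * R l j) = h
    generalize (∑ l, P i l * ζ l * R l j) = z
    generalize (2 * β j + α i) / 3 + s = y at hy
    have h1 := norm_add_le h z
    have h2 : ‖h + z‖ ^ 2 ≤ (‖h‖ + ‖z‖) ^ 2 := by gcongr
    rw [le_div_iff₀ hy]
    have h3 := mul_le_mul_of_nonneg_right h2 hy.le
    nlinarith [sq_nonneg (‖h‖ - y * ‖z‖)]
  have tot := Finset.sum_le_sum fun i (_ : i ∈ Finset.univ) =>
    Finset.sum_le_sum fun j (_ : j ∈ Finset.univ) => pt i j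
  simp only [Finset.sum_sub_distrib] at tot
  rw [e1, e2, e3, e4] at tot
  refine le_trans (le_of_eq ?_) tot
  simp only [← Finset.sum_sub_distrib]
  refine Finset.sum_congr rfl fun l _ => ?_
  have := (hXpos l).ne'
  change η l ^ 2 / X l = _
  simp only [hζ]
  field_simp
  ring

open Real MeasureTheory in
lemma integral_transfer {ι κ : Type} [Fintype ι] [Fintype κ] {p : ℝ} (hp1 : 1 < p) (hp2 : p ≤ 2)
    (k y : ι → ℝ) (k' y' : κ → ℝ) (hy : ∀ i, 0 < y i) (hy' : ∀ i, 0 < y' i)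
    (h0 : ∑ i, k' i ≤ ∑ i, k i)
    (h : ∀ s, 0 < s → ∑ i, k' i / (y' i + s) ≤ ∑ i, k i / (y i + s)) :
    ∑ i, k' i * y' i ^ (p - 2) ≤ ∑ i, k i * y i ^ (p - 2) := by
  rcases hp2.eq_or_lt with rfl | hp2
  · simpa using h0
  have hq : p - 1 ∈ Set.Ioo (0:ℝ) 1 := ⟨by linarith, by linarith⟩
  set C := ∫ t in Set.Ioi 0, rpowIntegrand₀₁ (p - 1) t 1 with hC
  have hCpos : 0 < C := integral_rpowIntegrand₀₁_one_pos hq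
  have rep : ∀ {τ : Type} [Fintype τ] (k y : τ → ℝ), (∀ i, 0 < y i) →
      ∑ i, k i * y i ^ (p - 2) =
        C⁻¹ * ∫ t in Set.Ioi 0, ∑ i, k i / y i * rpowIntegrand₀₁ (p - 1) t (y i) := by
    intro τ _ k y hy
    rw [integral_finsetSum _ fun i _ =>
      (integrableOn_rpowIntegrand₀₁_Ioi hq (hy i).le).const_mul _, Finset.mul_sum]
    refine Finset.sum_congr rfl fun i _ => ?_
    rw [integral_const_mul]
    have e := rpow_eq_const_mul_integral hq (hy i).le
    have e2 : y i ^ (p - 1) = y i ^ (p - 2) * y i := by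
      rw [← Real.rpow_add_one (hy i).ne']; congr 1; ring
    have := (hy i).ne'
    calc k i * y i ^ (p - 2) = k i / y i * y i ^ (p - 1) := by rw [e2]; field_simp
      _ = _ := by rw [e]; ring
  have rep1 := rep k y hy
  have rep2 : ∑ i, k' i * y' i ^ (p - 2) =
        C⁻¹ * ∫ t in Set.Ioi 0, ∑ i, k' i / y' i * rpowIntegrand₀₁ (p - 1) t (y' i) :=
    rep k' y' hy'
  rw [rep1, rep2]
  refine mul_le_mul_of_nonneg_left ?_ (inv_nonneg.2 hCpos.le)
  refine setIntegral_mono_on ?_ ?_ measurableSet_Ioi ?_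
  · exact integrable_finsetSum _ fun i _ =>
      (integrableOn_rpowIntegrand₀₁_Ioi hq (hy' i).le).const_mul _
  · exact integrable_finsetSum _ fun i _ =>
      (integrableOn_rpowIntegrand₀₁_Ioi hq (hy i).le).const_mul _
  · intro t ht
    have ht : 0 < t := ht
    have e : ∀ x k : ℝ, 0 < x → k / x * rpowIntegrand₀₁ (p - 1) t x =
        t ^ (p - 1 - 1) * (k / (x + t)) := by
      intro x k hx
      rw [rpowIntegrand₀₁_eq_pow_div hq ht.le hx.le]
      have : t + x ≠ 0 := by positivity
      have : x + t ≠ 0 := by positivity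
      field_simp
      ring
    rw [Finset.sum_congr rfl fun i _ => e (y i) (k i) (hy i),
      Finset.sum_congr rfl fun i _ => e (y' i) (k' i) (hy' i), ← Finset.mul_sum, ← Finset.mul_sum]
    exact mul_le_mul_of_nonneg_left (h t ht) (Real.rpow_nonneg ht.le _)

lemma holder_rev {n : ℕ} {p : ℝ} (hp1 : 1 < p) (hp2 : p ≤ 2) (η y : Fin n → ℝ)
    (hy : ∀ i, 0 < y i) :
    ((∑ i, |η i| ^ p) ^ (1 / p)) ^ 2 ≤
      (∑ i, η i ^ 2 * y i ^ (p - 2)) * ((∑ i, y i ^ p) ^ (1 / p)) ^ (2 - p) := by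
  rcases hp2.eq_or_lt with rfl | hp2
  · have : 0 ≤ ∑ i, η i ^ 2 := Finset.sum_nonneg fun i _ => sq_nonneg _
    simp only [Real.rpow_two, sq_abs, sub_self, Real.rpow_zero, mul_one]
    rw [← Real.sqrt_eq_rpow, Real.sq_sqrt this]
  have hpq : (2 / p).HolderConjugate (2 / (2 - p)) := by
    rw [Real.holderConjugate_iff]
    constructor
    · rw [lt_div_iff₀ (by linarith)]; linarith
    · have : (2 - p) ≠ 0 := by linarith
      field_simp
      ring
  have H := Real.inner_le_Lp_mul_Lq_of_nonneg Finset.univ hpq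
    (f := fun i => (η i ^ 2 * y i ^ (p - 2)) ^ (p / 2))
    (g := fun i => y i ^ ((2 - p) * (p / 2)))
    (fun i _ => Real.rpow_nonneg (mul_nonneg (sq_nonneg _) (Real.rpow_nonneg (hy i).le _)) _)
    (fun i _ => Real.rpow_nonneg (hy i).le _)
  have e1 : ∀ i, (η i ^ 2 * y i ^ (p - 2)) ^ (p / 2) * y i ^ ((2 - p) * (p / 2)) = |η i| ^ p := by
    intro i
    rw [Real.mul_rpow (sq_nonneg _) (Real.rpow_nonneg (hy i).le _), ← Real.rpow_mul (hy i).le,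
      mul_assoc, ← Real.rpow_add (hy i), ← sq_abs, ← Real.rpow_natCast, ← Real.rpow_mul (abs_nonneg _)]
    rw [show (p - 2) * (p / 2) + (2 - p) * (p / 2) = 0 by ring, Real.rpow_zero, mul_one]
    congr 1; push_cast; ring
  have e2 : ∀ i, ((η i ^ 2 * y i ^ (p - 2)) ^ (p / 2)) ^ (2 / p) = η i ^ 2 * y i ^ (p - 2) := by
    intro i
    rw [← Real.rpow_mul (mul_nonneg (sq_nonneg _) (Real.rpow_nonneg (hy i).le _)),
      show p / 2 * (2 / p) = 1 by field_simp, Real.rpow_one]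
  have e3 : ∀ i, (y i ^ ((2 - p) * (p / 2))) ^ (2 / (2 - p)) = y i ^ p := by
    intro i
    have : (2 - p) ≠ 0 := by linarith
    rw [← Real.rpow_mul (hy i).le]
    congr 1; field_simp
  simp only [e1, e2, e3] at H
  have hA : 0 ≤ ∑ i, η i ^ 2 * y i ^ (p - 2) :=
    Finset.sum_nonneg fun i _ => mul_nonneg (sq_nonneg _) (Real.rpow_nonneg (hy i).le _)
  have hB : 0 ≤ ∑ i, y i ^ p := Finset.sum_nonneg fun i _ => Real.rpow_nonneg (hy i).le _
  have hE : 0 ≤ ∑ i, |η i| ^ p := Finset.sum_nonneg fun i _ => Real.rpow_nonneg (abs_nonneg _) _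
  have H2 := Real.rpow_le_rpow hE H (show 0 ≤ 2 / p by positivity)
  rw [Real.mul_rpow (Real.rpow_nonneg hA _) (Real.rpow_nonneg hB _), ← Real.rpow_mul hA,
    ← Real.rpow_mul hB] at H2
  have h2p : (2 - p) ≠ 0 := by linarith
  rw [← Real.rpow_mul hB, ← Real.rpow_natCast, ← Real.rpow_mul hE]
  convert H2 using 2
  · push_cast; ring_nf
  · rw [show 1 / (2 / p) * (2 / p) = 1 by field_simp, Real.rpow_one]
  · congr 1; field_simp

lemma peierls {n : ℕ} {p : ℝ} (hp1 : 1 < p) (w : Fin n → Fin n → ℝ) (hw : ∀ i l, 0 ≤ w i l)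
    (hrow : ∀ i, ∑ l, w i l = 1) (hcol : ∀ l, ∑ i, w i l = 1) (α : Fin n → ℝ) (hα : ∀ i, 0 ≤ α i) :
    (∑ l, (∑ i, α i * w i l) ^ p) ^ (1 / p) ≤ (∑ i, α i ^ p) ^ (1 / p) := by
  refine Real.rpow_le_rpow ?_ ?_ (by positivity)
  · exact Finset.sum_nonneg fun l _ => Real.rpow_nonneg
      (Finset.sum_nonneg fun i _ => mul_nonneg (hα i) (hw i l)) _
  calc _ ≤ ∑ l, ∑ i, w i l * α i ^ p := by
        refine Finset.sum_le_sum fun l _ => ?_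
        have := Real.rpow_arith_mean_le_arith_mean_rpow Finset.univ (fun i => w i l) α
          (fun i _ => hw i l) (hcol l) (fun i _ => hα i) hp1.le
        simpa only [mul_comm] using this
    _ = _ := by
        rw [Finset.sum_comm]
        refine Finset.sum_congr rfl fun i _ => ?_
        rw [← Finset.sum_mul, hrow, one_mul]

lemma minkowski3 {n : ℕ} {p : ℝ} (hp1 : 1 < p) (a b : Fin n → ℝ) (ha : ∀ i, 0 ≤ a i)
    (hb : ∀ i, 0 ≤ b i) {ε : ℝ} (hε : 0 < ε) :
    (∑ l, ((2 * b l + a l) / 3 + ε) ^ p) ^ (1 / p) ≤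
      (2 * (∑ l, b l ^ p) ^ (1 / p) + (∑ l, a l ^ p) ^ (1 / p)) / 3 + ε * (n : ℝ) ^ (1 / p) := by
  have sc : ∀ (c : ℝ) (f : Fin n → ℝ), 0 ≤ c → (∀ i, 0 ≤ f i) →
      (∑ l, (c * f l) ^ p) ^ (1 / p) = c * (∑ l, f l ^ p) ^ (1 / p) := by
    intro c f hc hf
    simp_rw [fun l => Real.mul_rpow hc (hf l) (z := p)]
    rw [← Finset.mul_sum, Real.mul_rpow (Real.rpow_nonneg hc _)
      (Finset.sum_nonneg fun i _ => Real.rpow_nonneg (hf i) _), ← Real.rpow_mul hc,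
      show p * (1 / p) = 1 by field_simp, Real.rpow_one]
  have h1 := Real.Lp_add_le_of_nonneg Finset.univ hp1.le
    (f := fun l => 2 / 3 * b l + 1 / 3 * a l) (g := fun _ => ε * 1)
    (fun i _ => by have := ha i; have := hb i; positivity) (fun i _ => by positivity)
  have h2 := Real.Lp_add_le_of_nonneg Finset.univ hp1.le
    (f := fun l => 2 / 3 * b l) (g := fun l => 1 / 3 * a l)
    (fun i _ => by have := hb i; positivity) (fun i _ => by have := ha i; positivity)
  rw [sc _ _ (by norm_num) hb, sc _ _ (by norm_num) ha] at h2
  rw [sc ε (fun _ => 1) hε.le (fun _ => zero_le_one)] at h1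
  simp only [Real.one_rpow, Finset.sum_const, Finset.card_univ, Fintype.card_fin, nsmul_eq_mul,
    mul_one] at h1
  have e : ∀ l, (2 * b l + a l) / 3 + ε = 2 / 3 * b l + 1 / 3 * a l + ε := fun l => by ring
  simp_rw [e]
  linarith

lemma core_eps {n : ℕ} {p : ℝ} (hp1 : 1 < p) (hp2 : p ≤ 2)
    (P R : Matrix (Fin n) (Fin n) ℂ)
    (hP : P.conjTranspose * P = 1) (hP' : P * P.conjTranspose = 1)
    (hR : R.conjTranspose * R = 1) (hR' : R * R.conjTranspose = 1)
    (α β η : Fin n → ℝ)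
    (hh : ∀ i j, ((α i - β j : ℝ) : ℂ) * (P * R) i j = ∑ l, P i l * η l * R l j)
    (htr : ∑ i, ∑ j, ‖(P * R) i j‖ ^ 2 * ((|β j| ^ (p - 2) * β j) * (α i - β j)) = 0)
    {ε : ℝ} (hε : 0 < ε) :
    p * (p - 1) / 2 * ((∑ i, |η i| ^ p) ^ (1 / p)) ^ 2 ≤
      (∑ i, |α i| ^ p - ∑ i, |β i| ^ p) *
      ((2 * (∑ i, |β i| ^ p) ^ (1 / p) + (∑ i, |α i| ^ p) ^ (1 / p)) / 3
        + ε * (n : ℝ) ^ (1 / p)) ^ (2 - p) := by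
  have hk : 0 < p * (p - 1) / 2 := by
    have : 0 < p - 1 := by linarith
    positivity
  have hC : (P * R).conjTranspose * (P * R) = 1 := by
    rw [Matrix.conjTranspose_mul, Matrix.mul_assoc, ← Matrix.mul_assoc _ P, hP, Matrix.one_mul, hR]
  have hC' : (P * R) * (P * R).conjTranspose = 1 := by
    rw [Matrix.conjTranspose_mul, Matrix.mul_assoc, ← Matrix.mul_assoc R, hR', Matrix.one_mul, hP']
  set X : Fin n → ℝ := fun l =>
    (2 * (∑ j, |β j| * ‖R l j‖ ^ 2) + ∑ i, |α i| * ‖P i l‖ ^ 2) / 3 + ε with hX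
  have hb0 : ∀ l, 0 ≤ ∑ j, |β j| * ‖R l j‖ ^ 2 := fun l =>
    Finset.sum_nonneg fun j _ => mul_nonneg (abs_nonneg _) (sq_nonneg _)
  have ha0 : ∀ l, 0 ≤ ∑ i, |α i| * ‖P i l‖ ^ 2 := fun l =>
    Finset.sum_nonneg fun j _ => mul_nonneg (abs_nonneg _) (sq_nonneg _)
  have hXpos : ∀ l, 0 < X l := by
    intro l
    have h1 := hb0 l
    have h2 := ha0 l
    simp only [hX]; positivity
  -- Klein-type inequality
  have step1 : p * (p - 1) / 2 * ∑ i, ∑ j, ‖∑ l, P i l * η l * R l j‖ ^ 2 *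
      ((2 * |β j| + |α i|) / 3 + ε) ^ (p - 2) ≤ ∑ i, |α i| ^ p - ∑ i, |β i| ^ p := by
    have pt : ∀ i j, p * (p - 1) / 2 * (‖∑ l, P i l * η l * R l j‖ ^ 2 *
        ((2 * |β j| + |α i|) / 3 + ε) ^ (p - 2)) ≤ ‖(P * R) i j‖ ^ 2 * |α i| ^ p
          - ‖(P * R) i j‖ ^ 2 * |β j| ^ p
          - p * (‖(P * R) i j‖ ^ 2 * ((|β j| ^ (p - 2) * β j) * (α i - β j))) := by
      intro i j
      have := mul_le_mul_of_nonneg_left (scalar_eps (α := α i) (β := β j) hp1 hp2 hε)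
        (sq_nonneg ‖(P * R) i j‖)
      rw [← hh, norm_mul, Complex.norm_real, mul_pow, Real.norm_eq_abs, sq_abs]
      linarith
    have tot := Finset.sum_le_sum fun i (_ : i ∈ Finset.univ) =>
      Finset.sum_le_sum fun j (_ : j ∈ Finset.univ) => pt i j
    simp only [Finset.sum_sub_distrib, ← Finset.mul_sum] at tot
    rw [htr] at tot
    rw [Finset.sum_comm (f := fun i j => ‖(P * R) i j‖ ^ 2 * |β j| ^ p)] at tot
    simp only [← Finset.sum_mul, row_one _ hC', col_one _ hC, one_mul] at tot
    linarith
  have step2 : ∑ l, η l ^ 2 * X l ^ (p - 2) ≤ ∑ i, ∑ j, ‖∑ l, P i l * η l * R l j‖ ^ 2 *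
      ((2 * |β j| + |α i|) / 3 + ε) ^ (p - 2) := by
    have := integral_transfer hp1 hp2
      (fun ij : Fin n × Fin n => ‖∑ l, P ij.1 l * η l * R l ij.2‖ ^ 2)
      (fun ij => (2 * |β ij.2| + |α ij.1|) / 3 + ε) (fun l => η l ^ 2) X
      (fun ij => by positivity) hXpos
      (by rw [Fintype.sum_prod_type, sum_frob P R hP hR'])
      (by
        intro s hs
        rw [Fintype.sum_prod_type]
        have := resolvent_ineq P R hP hR' (fun i => |α i|) (fun i => |β i|) η (s := ε + s)
          (by linarith) (fun _ => abs_nonneg _) (fun _ => abs_nonneg _)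
        simpa only [hX, add_assoc] using this)
    rwa [Fintype.sum_prod_type] at this
  have step3 := holder_rev hp1 hp2 η X hXpos
  have step4 : (∑ i, X i ^ p) ^ (1 / p) ≤
      (2 * (∑ i, |β i| ^ p) ^ (1 / p) + (∑ i, |α i| ^ p) ^ (1 / p)) / 3
        + ε * (n : ℝ) ^ (1 / p) := by
    refine (minkowski3 hp1 _ _ ha0 hb0 hε).trans ?_
    have h1 := peierls hp1 (fun i l => ‖P i l‖ ^ 2) (fun _ _ => sq_nonneg _)
      (row_one P hP') (col_one P hP) (fun i => |α i|) (fun _ => abs_nonneg _)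
    have h2 := peierls hp1 (fun j l => ‖R l j‖ ^ 2) (fun _ _ => sq_nonneg _)
      (col_one R hR) (row_one R hR') (fun i => |β i|) (fun _ => abs_nonneg _)
    linarith
  have hXn : 0 ≤ (∑ i, X i ^ p) ^ (1 / p) :=
    Real.rpow_nonneg (Finset.sum_nonneg fun i _ => Real.rpow_nonneg (hXpos i).le _) _
  have hS : 0 ≤ ∑ l, η l ^ 2 * X l ^ (p - 2) :=
    Finset.sum_nonneg fun i _ => mul_nonneg (sq_nonneg _) (Real.rpow_nonneg (hXpos i).le _)
  have step5 := Real.rpow_le_rpow hXn step4 (show 0 ≤ 2 - p by linarith)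
  calc _ ≤ p * (p - 1) / 2 * ((∑ l, η l ^ 2 * X l ^ (p - 2)) *
        ((∑ i, X i ^ p) ^ (1 / p)) ^ (2 - p)) := by gcongr
    _ = (p * (p - 1) / 2 * ∑ l, η l ^ 2 * X l ^ (p - 2)) *
        ((∑ i, X i ^ p) ^ (1 / p)) ^ (2 - p) := by ring
    _ ≤ _ := by
      have h7 := (mul_le_mul_of_nonneg_left step2 hk.le).trans step1
      exact mul_le_mul h7 step5 (Real.rpow_nonneg hXn _) ((mul_nonneg hk.le hS).trans h7)

lemma core_s9 {n : ℕ} {p : ℝ} (hp1 : 1 < p) (hp2 : p ≤ 2)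
    (P R : Matrix (Fin n) (Fin n) ℂ)
    (hP : P.conjTranspose * P = 1) (hP' : P * P.conjTranspose = 1)
    (hR : R.conjTranspose * R = 1) (hR' : R * R.conjTranspose = 1)
    (α β η : Fin n → ℝ)
    (hh : ∀ i j, ((α i - β j : ℝ) : ℂ) * (P * R) i j = ∑ l, P i l * η l * R l j)
    (htr : ∑ i, ∑ j, ‖(P * R) i j‖ ^ 2 * ((|β j| ^ (p - 2) * β j) * (α i - β j)) = 0) :
    ((∑ i, |β i| ^ p) ^ (1 / p)) ^ 2 + (p - 1) * ((∑ i, |η i| ^ p) ^ (1 / p)) ^ 2 ≤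
      ((∑ i, |α i| ^ p) ^ (1 / p)) ^ 2 := by
  have hA : 0 ≤ ∑ i, |α i| ^ p := Finset.sum_nonneg fun i _ => Real.rpow_nonneg (abs_nonneg _) _
  have hB : 0 ≤ ∑ i, |β i| ^ p := Finset.sum_nonneg fun i _ => Real.rpow_nonneg (abs_nonneg _) _
  set a := (∑ i, |α i| ^ p) ^ (1 / p) with ha
  set b := (∑ i, |β i| ^ p) ^ (1 / p) with hb
  set c := (∑ i, |η i| ^ p) ^ (1 / p) with hc
  have ha0 : 0 ≤ a := Real.rpow_nonneg hA _
  have hb0 : 0 ≤ b := Real.rpow_nonneg hB _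
  have eA : ∑ i, |α i| ^ p = a ^ p := by
    rw [ha, ← Real.rpow_mul hA, show 1 / p * p = 1 by field_simp, Real.rpow_one]
  have eB : ∑ i, |β i| ^ p = b ^ p := by
    rw [hb, ← Real.rpow_mul hB, show 1 / p * p = 1 by field_simp, Real.rpow_one]
  have key : ∀ ε : ℝ, 0 < ε → p * (p - 1) / 2 * c ^ 2 ≤
      (a ^ p - b ^ p) * ((2 * b + a) / 3 + ε * (n : ℝ) ^ (1 / p)) ^ (2 - p) := by
    intro ε hε
    have := core_eps hp1 hp2 P R hP hP' hR hR' α β η hh htr hε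
    rw [← ha, ← hb, ← hc, eA, eB] at this
    exact this
  have hk : 0 < p * (p - 1) / 2 := by
    have : 0 < p - 1 := by linarith
    positivity
  have lim : p * (p - 1) / 2 * c ^ 2 ≤ (a ^ p - b ^ p) * ((2 * b + a) / 3) ^ (2 - p) := by
    have hcont : Continuous fun ε : ℝ =>
        (a ^ p - b ^ p) * ((2 * b + a) / 3 + ε * (n : ℝ) ^ (1 / p)) ^ (2 - p) :=
      continuous_const.mul (Continuous.rpow_const (by fun_prop) (fun _ => Or.inr (by linarith)))
    have ht := (hcont.tendsto 0).mono_left (nhdsWithin_le_nhds (s := Set.Ioi 0))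
    simp only [zero_mul, add_zero] at ht
    refine ge_of_tendsto ht ?_
    filter_upwards [self_mem_nhdsWithin] with ε hε using key ε hε
  rcases le_or_gt b a with hba | hba
  · have := scalar_final hp1 hp2 hb0 hba
    have h2 : p / 2 * ((p - 1) * c ^ 2) ≤ p / 2 * (a ^ 2 - b ^ 2) := by
      calc _ = p * (p - 1) / 2 * c ^ 2 := by ring
        _ ≤ _ := lim.trans this
    have := le_of_mul_le_mul_left h2 (by linarith)
    linarith
  · exfalso
    have h1 : a ^ p < b ^ p := Real.rpow_lt_rpow ha0 hba (by linarith)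
    have h2 : 0 < ((2 * b + a) / 3) ^ (2 - p) := Real.rpow_pos_of_pos (by linarith) _
    have h3 : (a ^ p - b ^ p) * ((2 * b + a) / 3) ^ (2 - p) < 0 :=
      mul_neg_of_neg_of_pos (by linarith) h2
    have h4 : 0 ≤ p * (p - 1) / 2 * c ^ 2 := mul_nonneg hk.le (sq_nonneg _)
    linarith

open Matrix in
lemma herm_diag {n : ℕ} {A : Matrix (Fin n) (Fin n) ℂ} (hA : A.IsHermitian) :
    ∃ U : Matrix (Fin n) (Fin n) ℂ, Uᴴ * U = 1 ∧ U * Uᴴ = 1 ∧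
      A * U = U * diagonal (fun i => (hA.eigenvalues i : ℂ)) := by
  refine ⟨hA.eigenvectorUnitary, ?_, ?_, ?_⟩
  · exact Unitary.coe_star_mul_self hA.eigenvectorUnitary
  · exact Unitary.coe_mul_star_self hA.eigenvectorUnitary
  · have h := hA.spectral_theorem
    rw [Unitary.conjStarAlgAut_apply] at h
    have h2 := Unitary.coe_star_mul_self hA.eigenvectorUnitary
    have h3 := congrArg (· * (hA.eigenvectorUnitary : Matrix (Fin n) (Fin n) ℂ)) h
    simp only [Matrix.mul_assoc, h2, Matrix.mul_one] at h3
    exact h3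

open Matrix in
lemma trace_zero {n : ℕ} (u H : Matrix (Fin n) (Fin n) ℂ) (huu : u * u = 1)
    (hH : u * H * u = -H) (β d : Fin n → ℂ) (hd : ∀ i j, β i = β j → d i = d j)
    (hc : u * diagonal β = diagonal β * u) : trace (diagonal d * H) = 0 := by
  have hcd : u * diagonal d = diagonal d * u := by
    ext i j
    have := congrFun (congrFun hc i) j
    rw [mul_diagonal, diagonal_mul] at this ⊢
    by_cases h : u i j = 0
    · simp [h]
    · have : β j = β i := by
        apply mul_left_cancel₀ h; rw [this]; ring
      rw [hd _ _ this]; ring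
  have h1 : trace (diagonal d * (u * H * u)) = trace (diagonal d * H) := by
    calc trace (diagonal d * (u * H * u)) = trace ((diagonal d * u) * H * u) := by
          simp only [Matrix.mul_assoc]
      _ = trace (u * (diagonal d * H * u)) := by rw [← hcd]; simp only [Matrix.mul_assoc]
      _ = trace ((diagonal d * H * u) * u) := trace_mul_comm _ _
      _ = _ := by rw [Matrix.mul_assoc, huu, Matrix.mul_one]
  rw [hH, Matrix.mul_neg, trace_neg] at h1
  have h2 : (2 : ℂ) * trace (diagonal d * H) = 0 := by
    linear_combination -h1
  simpa using h2

open Matrix in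
lemma matrix_ineq {n : ℕ} {p : ℝ} (hp1 : 1 < p) (hp2 : p ≤ 2)
    (A B H u : Matrix (Fin n) (Fin n) ℂ) (hA : A.IsHermitian) (hB : B.IsHermitian)
    (hH : H.IsHermitian) (huu : u * u = 1) (hAB : A - B = H) (hBu : u * B = B * u)
    (hHu : u * H * u = -H) :
    ((∑ i, |hB.eigenvalues i| ^ p) ^ (1 / p)) ^ 2
      + (p - 1) * ((∑ i, |hH.eigenvalues i| ^ p) ^ (1 / p)) ^ 2 ≤
      ((∑ i, |hA.eigenvalues i| ^ p) ^ (1 / p)) ^ 2 := by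
  obtain ⟨U, hU, hU', eU⟩ := herm_diag hA
  obtain ⟨V, hV, hV', eV⟩ := herm_diag hB
  obtain ⟨W, hW, hW', eW⟩ := herm_diag hH
  generalize hA.eigenvalues = α at *
  generalize hB.eigenvalues = β at *
  generalize hH.eigenvalues = η at *
  have cancel : ∀ {X Y : Matrix (Fin n) (Fin n) ℂ}, X * Y = 1 → ∀ Z, X * (Y * Z) = Z := by
    intro X Y h Z
    rw [← Matrix.mul_assoc, h, Matrix.one_mul]
  have eU2 : diagonal (fun i => (α i : ℂ)) * Uᴴ = Uᴴ * A := by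
    calc _ = Uᴴ * (U * diagonal (fun i => (α i : ℂ))) * Uᴴ := by rw [cancel hU]
      _ = _ := by rw [← eU, Matrix.mul_assoc, Matrix.mul_assoc, hU', Matrix.mul_one]
  have eC : (Uᴴ * W) * (Wᴴ * V) = Uᴴ * V := by
    rw [Matrix.mul_assoc, cancel hW']
  have comm : diagonal (fun i => (α i : ℂ)) * (Uᴴ * V) - (Uᴴ * V) * diagonal (fun i => (β i : ℂ))
      = Uᴴ * H * V := by
    rw [← Matrix.mul_assoc, eU2, Matrix.mul_assoc _ V, ← eV, ← hAB]
    simp only [Matrix.mul_sub, Matrix.sub_mul, Matrix.mul_assoc]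
  have eH : H = W * diagonal (fun i => (η i : ℂ)) * Wᴴ := by
    rw [← eW, Matrix.mul_assoc, hW', Matrix.mul_one]
  have entry : ∀ i j, ((α i - β j : ℝ) : ℂ) * (Uᴴ * V) i j = (Uᴴ * H * V) i j := by
    intro i j
    rw [← comm, Matrix.sub_apply, diagonal_mul, mul_diagonal]
    push_cast; ring
  refine core_s9 hp1 hp2 (Uᴴ * W) (Wᴴ * V) ?_ ?_ ?_ ?_ α β η ?_ ?_
  · rw [conjTranspose_mul, conjTranspose_conjTranspose, Matrix.mul_assoc, cancel hU', hW]
  · rw [conjTranspose_mul, conjTranspose_conjTranspose, Matrix.mul_assoc, cancel hW', hU]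
  · rw [conjTranspose_mul, conjTranspose_conjTranspose, Matrix.mul_assoc, cancel hW', hV]
  · rw [conjTranspose_mul, conjTranspose_conjTranspose, Matrix.mul_assoc, cancel hV', hW]
  · intro i j
    rw [eC, entry, eH]
    rw [show Uᴴ * (W * diagonal (fun i => (η i : ℂ)) * Wᴴ) * V =
      (Uᴴ * W) * diagonal (fun i => (η i : ℂ)) * (Wᴴ * V) by simp only [Matrix.mul_assoc]]
    rw [Matrix.mul_apply]
    simp only [mul_diagonal]
  · rw [eC]
    set d : Fin n → ℝ := fun j => |β j| ^ (p - 2) * β j with hd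
    have tz := trace_zero (Vᴴ * u * V) (Vᴴ * H * V)
      (by simp only [Matrix.mul_assoc]; rw [cancel hV', cancel huu, hV])
      (by
        calc Vᴴ * u * V * (Vᴴ * H * V) * (Vᴴ * u * V) = Vᴴ * (u * H * u) * V := by
              simp only [Matrix.mul_assoc]; rw [cancel hV', cancel hV']
          _ = _ := by rw [hHu]; simp)
      (fun j => (β j : ℂ)) (fun j => (d j : ℂ))
      (by
        intro i j h
        have h : β i = β j := by exact_mod_cast h
        simp only [hd, h])
      (by
        have eV2 : diagonal (fun i => (β i : ℂ)) * Vᴴ = Vᴴ * B := by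
          calc _ = Vᴴ * (V * diagonal (fun i => (β i : ℂ))) * Vᴴ := by rw [cancel hV]
            _ = _ := by rw [← eV, Matrix.mul_assoc, Matrix.mul_assoc, hV', Matrix.mul_one]
        rw [Matrix.mul_assoc, ← eV, ← Matrix.mul_assoc, ← Matrix.mul_assoc, ← Matrix.mul_assoc, eV2,
          Matrix.mul_assoc Vᴴ u B, hBu]
        simp only [Matrix.mul_assoc])
    have e : ((∑ i, ∑ j, ‖(Uᴴ * V) i j‖ ^ 2 * (d j * (α i - β j)) : ℝ) : ℂ) =
        trace (diagonal (fun j => (d j : ℂ)) * (Vᴴ * H * V)) := by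
      have e0 : Vᴴ * H * V = (Uᴴ * V)ᴴ * (Uᴴ * H * V) := by
        rw [conjTranspose_mul, conjTranspose_conjTranspose]
        simp only [Matrix.mul_assoc]; rw [cancel hU']
      rw [e0, trace, Finset.sum_comm]
      push_cast
      refine Finset.sum_congr rfl fun j _ => ?_
      rw [diag_apply, diagonal_mul, Matrix.mul_apply, Finset.mul_sum]
      refine Finset.sum_congr rfl fun i _ => ?_
      rw [← entry, conjTranspose_apply, Complex.star_def, ← Complex.conj_mul']
      push_cast
      ring
    rw [tz] at e
    exact_mod_cast e

/-- Matrix instance of the martingale convexity inequality, `1 < p ≤ 2`: for `x` Hermitian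
and `u` a Hermitian unitary,
`‖x‖_p² ≥ ‖(x + uxu)/2‖_p² + (p−1)·‖(x − uxu)/2‖_p²`. -/
theorem martingale_convexity_matrix_conjugation {n : ℕ} (hn : 1 ≤ n)
    (p : ℝ) (hp1 : 1 < p) (hp2 : p ≤ 2)
    (x u : Matrix (Fin n) (Fin n) ℂ) (hx : x.IsHermitian) (hu : u.IsHermitian)
    (hu_unitary : u * u = 1) :
    hermitianSchattenNorm p x ^ 2
    ≥ hermitianSchattenNorm p (((1 : ℂ) / 2) • (x + u * x * u)) ^ 2
      + (p - 1) * hermitianSchattenNorm p (((1 : ℂ) / 2) • (x - u * x * u)) ^ 2 := by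
  have hc : (u * x * u).IsHermitian := by
    have h : (u * x * u).conjTranspose = u * x * u := by
      rw [Matrix.conjTranspose_mul, Matrix.conjTranspose_mul, hu.eq, hx.eq, Matrix.mul_assoc]
    exact h
  have hs : star ((1 : ℂ) / 2) = 1 / 2 := by simp
  have hB : (((1 : ℂ) / 2) • (x + u * x * u)).IsHermitian := by
    have h : (((1 : ℂ) / 2) • (x + u * x * u)).conjTranspose = ((1 : ℂ) / 2) • (x + u * x * u) := by
      rw [Matrix.conjTranspose_smul, hs, (hx.add hc).eq]
    exact h
  have hH : (((1 : ℂ) / 2) • (x - u * x * u)).IsHermitian := by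
    have h : (((1 : ℂ) / 2) • (x - u * x * u)).conjTranspose = ((1 : ℂ) / 2) • (x - u * x * u) := by
      rw [Matrix.conjTranspose_smul, hs, (hx.sub hc).eq]
    exact h
  have c1 : u * (u * x * u) = x * u := by
    rw [← Matrix.mul_assoc, ← Matrix.mul_assoc, hu_unitary, Matrix.one_mul]
  have c2 : (u * x * u) * u = u * x := by
    rw [Matrix.mul_assoc, hu_unitary, Matrix.mul_one]
  have c3 : x * u * u = x := by
    rw [Matrix.mul_assoc, hu_unitary, Matrix.mul_one]
  unfold hermitianSchattenNorm
  rw [dif_pos hx, dif_pos hB, dif_pos hH]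
  refine matrix_ineq hp1 hp2 x _ _ u hx hB hH hu_unitary ?_ ?_ ?_
  · rw [← sub_eq_zero]
    module
  · rw [Matrix.mul_smul, Matrix.smul_mul, Matrix.mul_add, Matrix.add_mul, c1, c2, add_comm]
  · rw [Matrix.mul_smul, Matrix.smul_mul, Matrix.mul_sub, Matrix.sub_mul, c1, c3, ← smul_neg,
      neg_sub]
end
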